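/- arXiv:2010.08922 — 3 statements merged into one kernel-verified Lean document; each statement's English description precedes it below -/
import Mathlib

section
/- Let m ∈ ℕ be sufficiently large, let λ > 0, let 1 ≤ L < n be integers, and let A_1,…,A_m,B_1,…,B_m be complement-disjoint subsets of {1,…,n} of size n − L. Fix a symmetric n×n matrix M with ±1 entries such that every submatrix M[A_ℓ,B_ℓ] (ℓ = 1,…,m) is λ-heavy, and form a random symmetric (n+1)×(n+1) matrix M' by appending to M a new row and column whose entries x_1,…,x_n,z are independent Rademacher random variables (the new row and column are equal). Then with probability at least 1 − m^{-1/24}, setting m' = ⌈m/36⌉, there exist complement-disjoint subsets A'_1,…,A'_{m'},B'_1,…,B'_{m'} of {1,…,n+1} of size n − L + 2 such that every submatrix M'[A'_ℓ,B'_ℓ] (ℓ = 1,…,m') is λ/(4n^4)-heavy. -/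
/-!
For index sets `A`, `B` inside `{0, …, n - 1}`, both enlarged by the new index, expanding the
permanent of the extended matrix along the new row and the new column shows that it is a quadratic
form in the new off-diagonal signs `s_i`, with coefficients given by permanents of submatrices of
`M` (`permOn_extSym`). Each heavy submatrix `M[A_ℓ, B_ℓ]` can be enlarged by one row and one column
so that the corresponding form has a large coefficient at some pair of variables lying in the
complements of `A_ℓ` and `B_ℓ` (`exists_enlarge`). By complement-disjointness these pairs are
disjoint for different `ℓ`, so the theorem reduces to a statement about families of quadratic forms
with disjoint pairs of distinguished variables (`quad_family`): with probability at least
`1 - m^(-1/24)` at least `m / 36` of the forms are not small.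

The engine is `tail_affine_off`, on functions `f_ℓ` that are affine in the variables outside a
small set `C_ℓ` and that can always be made large by changing at most two private variables. The
number of small `f_ℓ` is controlled through its moment of order `q ≈ log m`, that is, through the
probability that all members of a random `q`-tuple are small (`tuple_bound`). If some member has
many large coefficients, the Littlewood–Offord inequality makes it unlikely to be small; otherwise
the members of a typical tuple hardly depend on each other's private variables, and each of them
being small costs a factor `3/4`.

For quadratic forms, consider the graph of large coefficients of each form; it has a large matching
or a small vertex cover (`matching_or_cover`). If at least half of the forms have a small cover,
these are close to affine functions of the remaining variables, and `tail_affine_off` applies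
(`quad_family_cover`). Otherwise at least half have a large matching; decoupling, followed by
`tail_affine_off` and Littlewood–Offord, shows that each of these is unlikely to be small
(`quad_smallBall`), and Markov's inequality finishes the proof (`quad_family_matching`).
-/

open Finset

/-- The real number (`1` or `-1`) associated to a Boolean: a Rademacher value. -/
noncomputable def rad (b : Bool) : ℝ := if b then 1 else -1

/-- The permanent of the submatrix of `M` with row set `A` and column set `B`,
defined as a sum over all bijections between `A` and `B` (it equals `0` if
`A.card ≠ B.card`). Since the permanent is invariant under row and column
permutations, this faithfully represents `per M[A,B]`. -/
noncomputable def permOn {m n : ℕ} (M : Matrix (Fin m) (Fin n) ℝ)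
    (A : Finset (Fin m)) (B : Finset (Fin n)) : ℝ :=
  ∑ σ : {x // x ∈ A} ≃ {y // y ∈ B}, ∏ i : {x // x ∈ A}, M i.1 (σ i).1

/-- The random symmetric extension of a fixed `n' × n'` matrix `M` to an `n × n` matrix:
the top-left `n' × n'` block is `M`, and the remaining entries are Rademacher values
determined symmetrically by the Boolean data `ω`. As `ω` ranges uniformly over all Boolean
data, the new entries (on and above the diagonal) are i.i.d. Rademacher random variables. -/
noncomputable def extSym {n' : ℕ} (n : ℕ) (M : Matrix (Fin n') (Fin n') ℝ)
    (ω : Fin n → Fin n → Bool) : Matrix (Fin n) (Fin n) ℝ :=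
  fun i j =>
    if h : (i : ℕ) < n' ∧ (j : ℕ) < n' then M ⟨i, h.1⟩ ⟨j, h.2⟩
    else if i ≤ j then rad (ω i j) else rad (ω j i)

open Classical in
/-- The probability of the event `P` for the random symmetric extension of `M` to size `n`
(i.e. conditionally on the outcome `M` for the top-left block). -/
noncomputable def probExt {n' : ℕ} (n : ℕ) (M : Matrix (Fin n') (Fin n') ℝ)
    (P : Matrix (Fin n) (Fin n) ℝ → Prop) : ℝ :=
  ((univ.filter fun ω : Fin n → Fin n → Bool => P (extSym n M ω)).card : ℝ) / 2 ^ (n * n)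

/-- A family of subsets of `{1,…,n}` is complement-disjoint if the complements of its
members are pairwise disjoint. -/
def cdisj {n : ℕ} {ι : Type*} (S : ι → Finset (Fin n)) : Prop :=
  ∀ i j : ι, i ≠ j → Disjoint (S i)ᶜ (S j)ᶜ


/-! ### Indicators and resampling on the cube -/

/-- The indicator of a proposition, as a real number. -/
noncomputable def ind (p : Prop) : ℝ := by
  classical exact if p then 1 else 0

lemma ind_of {p : Prop} (h : p) : ind p = 1 := by simp [ind, h]

lemma ind_of_not {p : Prop} (h : ¬ p) : ind p = 0 := by simp [ind, h]

lemma ind_nonneg (p : Prop) : 0 ≤ ind p := by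
  by_cases h : p <;> simp [ind, h]

lemma ind_le_one (p : Prop) : ind p ≤ 1 := by
  by_cases h : p <;> simp [ind, h]

lemma ind_mono {p q : Prop} (h : p → q) : ind p ≤ ind q := by
  by_cases hp : p
  · rw [ind_of hp, ind_of (h hp)]
  · rw [ind_of_not hp]; exact ind_nonneg q

lemma ind_le_add {p q r : Prop} (h : p → q ∨ r) : ind p ≤ ind q + ind r := by
  by_cases hp : p
  · rcases h hp with hq | hr
    · rw [ind_of hp, ind_of hq]; linarith [ind_nonneg r]
    · rw [ind_of hp, ind_of hr]; linarith [ind_nonneg q]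
  · rw [ind_of_not hp]; exact add_nonneg (ind_nonneg q) (ind_nonneg r)

lemma ind_exists_le {β : Type*} [Fintype β] (P : β → Prop) :
    ind (∃ b, P b) ≤ ∑ b, ind (P b) := by
  by_cases h : ∃ b, P b
  · obtain ⟨b, hb⟩ := h
    rw [ind_of ⟨b, hb⟩, ← ind_of hb]
    exact single_le_sum (f := fun b => ind (P b)) (fun b _ => ind_nonneg _) (mem_univ b)
  · rw [ind_of_not h]; exact sum_nonneg fun b _ => ind_nonneg _

lemma ind_and (p q : Prop) : ind (p ∧ q) = ind p * ind q := by
  by_cases hp : p <;> by_cases hq : q <;> simp [ind, hp, hq]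

lemma ind_not (p : Prop) : ind (¬ p) = 1 - ind p := by
  by_cases hp : p <;> simp [ind, hp]

lemma sum_ind {β : Type*} [Fintype β] (P : β → Prop) [DecidablePred P] :
    ∑ b, ind (P b) = ((univ.filter P).card : ℝ) := by
  rw [card_filter]
  push_cast
  refine sum_congr rfl fun b _ => ?_
  by_cases h : P b <;> simp [ind, h]

lemma ind_forall {β : Type*} [Fintype β] (P : β → Prop) :
    ind (∀ b, P b) = ∏ b, ind (P b) := by
  by_cases h : ∀ b, P b
  · rw [ind_of h, prod_eq_one fun b _ => ind_of (h b)]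
  · push Not at h
    obtain ⟨b, hb⟩ := h
    rw [ind_of_not (fun h => hb (h b)), prod_eq_zero (mem_univ b) (ind_of_not hb)]

/-- The point of the cube which agrees with `z` on `C` and with `w` off `C`. -/
def mix {ι : Type*} [DecidableEq ι] (C : Finset ι) (z w : ι → Bool) : ι → Bool :=
  fun i => if i ∈ C then z i else w i

/-- Resampling: if `z` and `w` are independent and uniform on the cube, then so is `mix C z w`. -/
lemma sum_mix {ι : Type*} [Fintype ι] [DecidableEq ι] (C : Finset ι) (F : (ι → Bool) → ℝ) :
    ∑ z, ∑ w, F (mix C z w) = (Fintype.card (ι → Bool) : ℝ) * ∑ x, F x := by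
  have hinv : Function.Involutive
      (fun p : (ι → Bool) × (ι → Bool) => (mix C p.1 p.2, mix C p.2 p.1)) := by
    rintro ⟨z, w⟩
    ext i <;> by_cases h : i ∈ C <;> simp [mix, h]
  have h := Equiv.sum_comp hinv.toPerm (fun p : (ι → Bool) × (ι → Bool) => F p.1)
  rw [← Fintype.sum_prod_type' (f := fun z w => F (mix C z w))]
  refine h.trans ?_
  rw [Fintype.sum_prod_type]
  simp [mul_sum]

/-- Resampling one coordinate `j` of a uniform tuple leaves it uniform. -/
lemma sum_update {κ Λ : Type*} [Fintype κ] [DecidableEq κ] [Fintype Λ] (j : κ)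
    (F : (κ → Λ) → ℝ) :
    ∑ g, ∑ k, F (Function.update g j k) = (Fintype.card Λ : ℝ) * ∑ g, F g := by
  have hinv : Function.Involutive
      (fun p : (κ → Λ) × Λ => (Function.update p.1 j p.2, p.1 j)) := by
    rintro ⟨g, k⟩
    simp
  have h := Equiv.sum_comp hinv.toPerm (fun p : (κ → Λ) × Λ => F p.1)
  rw [← Fintype.sum_prod_type' (f := fun g k => F (Function.update g j k))]
  refine h.trans ?_
  rw [Fintype.sum_prod_type]
  simp [mul_sum]

/-! ### The linear Littlewood–Offord inequality -/

lemma centralBinom_sq_mul_le (k : ℕ) : k.centralBinom ^ 2 * (2 * k + 1) ≤ 16 ^ k := by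
  induction k with
  | zero => simp
  | succ k ih =>
    have h := Nat.succ_mul_centralBinom_succ k
    have h2 : (k + 1) ^ 2 * ((k + 1).centralBinom ^ 2 * (2 * (k + 1) + 1)) ≤
        (k + 1) ^ 2 * 16 ^ (k + 1) := by
      calc (k + 1) ^ 2 * ((k + 1).centralBinom ^ 2 * (2 * (k + 1) + 1))
          = ((k + 1) * (k + 1).centralBinom) ^ 2 * (2 * k + 3) := by ring
        _ = 4 * (2 * k + 1) * (2 * k + 3) * (k.centralBinom ^ 2 * (2 * k + 1)) := by
          rw [h]; ring
        _ ≤ 4 * (2 * k + 1) * (2 * k + 3) * 16 ^ k := by gcongr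
        _ ≤ (16 * (k + 1) ^ 2) * 16 ^ k := by
          refine Nat.mul_le_mul_right _ ?_
          nlinarith
        _ = (k + 1) ^ 2 * 16 ^ (k + 1) := by ring
    exact Nat.le_of_mul_le_mul_left h2 (by positivity)

lemma choose_half_sq_mul_le (T : ℕ) : (T.choose (T / 2)) ^ 2 * (T + 1) ≤ 4 ^ T := by
  rcases Nat.even_or_odd' T with ⟨k, rfl | rfl⟩
  · have h := centralBinom_sq_mul_le k
    rw [Nat.centralBinom_eq_two_mul_choose] at h
    rw [Nat.mul_div_cancel_left k (by norm_num), pow_mul]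
    simpa using h
  · have h := centralBinom_sq_mul_le (k + 1)
    have hc : (k + 1).centralBinom = 2 * (2 * k + 1).choose k := by
      rw [Nat.centralBinom_eq_two_mul_choose, show 2 * (k + 1) = (2 * k + 1) + 1 by ring,
        Nat.choose_succ_succ, Nat.choose_symm_half]
      ring
    have hd : (2 * k + 1) / 2 = k := by omega
    rw [hc] at h
    have e' : (4 : ℕ) ^ (2 * k + 1) = 4 * 16 ^ k := by rw [pow_succ, pow_mul]; norm_num [mul_comm]
    rw [hd, e']
    have e : (16 : ℕ) ^ (k + 1) = 16 * 16 ^ k := by ring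
    rw [e] at h
    nlinarith [sq_nonneg ((2 * k + 1).choose k)]

lemma choose_half_le (T : ℕ) : (T.choose (T / 2) : ℝ) ≤ 2 ^ T / √((T : ℝ) + 1) := by
  have h : ((T.choose (T / 2) : ℝ)) ^ 2 * (T + 1) ≤ 4 ^ T := by
    exact_mod_cast choose_half_sq_mul_le T
  have hs : 0 < √((T : ℝ) + 1) := Real.sqrt_pos.2 (by positivity)
  rw [le_div_iff₀ hs]
  refine abs_le_of_sq_le_sq' ?_ (by positivity) |>.2
  rw [mul_pow, Real.sq_sqrt (by positivity)]
  calc _ ≤ (4 : ℝ) ^ T := h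
    _ = _ := by rw [← pow_mul, mul_comm, pow_mul]; norm_num

lemma abs_rad_sub_le {a b : Bool} : |rad a - rad b| ≤ 2 := by
  cases a <;> cases b <;> norm_num [rad]

/-- The Erdős–Littlewood–Offord inequality when all coefficients are large: the points of
the cube with a small value form an antichain once the cube is oriented along the signs of the
coefficients. -/
lemma littlewoodOfford_all {J : Type*} [Fintype J] [DecidableEq J] (l : J → ℝ) (α τ : ℝ)
    (hτ : 0 < τ) (hl : ∀ j, τ ≤ |l j|) :
    ∑ w : J → Bool, ind (|α + ∑ j, l j * rad (w j)| < τ) ≤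
      2 ^ Fintype.card J / √((Fintype.card J : ℝ) + 1) := by
  classical
  rw [sum_ind]
  refine le_trans ?_ (choose_half_le _)
  norm_cast
  set g : (J → Bool) → Finset J := fun w => univ.filter fun j => w j = decide (0 < l j) with hg
  have hinj : Function.Injective g := by
    intro w w' h
    funext j
    have : j ∈ g w ↔ j ∈ g w' := by rw [h]
    simp only [hg, mem_filter, mem_univ, true_and] at this
    cases h1 : w j <;> cases h2 : w' j <;> cases h3 : decide (0 < l j) <;> simp_all
  rw [← card_image_of_injective _ hinj]
  apply IsAntichain.sperner
  intro S hS S' hS' hne hsub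
  simp only [coe_image, coe_filter, mem_univ, true_and, Set.mem_image, Set.mem_ofPred_eq] at hS hS'
  obtain ⟨w, hw, rfl⟩ := hS
  obtain ⟨w', hw', rfl⟩ := hS'
  have hval : ∀ v : J → Bool, ∀ j, l j * rad (v j) = if j ∈ g v then |l j| else -|l j| := by
    intro v j
    have h0 : l j ≠ 0 := fun h => by have := hl j; rw [h, abs_zero] at this; linarith
    rcases lt_or_gt_of_ne h0 with h | h
    · have h' : ¬ (0 < l j) := not_lt.2 h.le
      cases hv : v j <;> simp [hg, rad, hv, h', abs_of_neg h]
    · cases hv : v j <;> simp [hg, rad, hv, h, abs_of_pos h]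
  obtain ⟨j₀, hj₀', hj₀⟩ : ∃ j, j ∈ g w' ∧ j ∉ g w := by
    by_contra hcon
    push Not at hcon
    exact hne (Subset.antisymm hsub hcon)
  have hdiff : 2 * τ ≤ ∑ j, (l j * rad (w' j) - l j * rad (w j)) := by
    have hnn : ∀ j ∈ univ, 0 ≤ l j * rad (w' j) - l j * rad (w j) := by
      intro j _
      rw [hval, hval]
      by_cases h1 : j ∈ g w
      · simp [h1, hsub h1]
      · by_cases h2 : j ∈ g w' <;> simp [h1, h2]
    refine le_trans ?_ (single_le_sum hnn (mem_univ j₀))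
    rw [hval, hval, if_pos hj₀', if_neg hj₀]
    linarith [hl j₀]
  rw [sum_sub_distrib] at hdiff
  rw [abs_lt] at hw hw'
  linarith [hw.1, hw'.2]

lemma littlewoodOfford {ι : Type*} [Fintype ι] [DecidableEq ι] (l : ι → ℝ) (α τ : ℝ)
    (hτ : 0 < τ) (t : ℕ) (ht : 0 < t) (J : Finset ι) (hJ : t ≤ J.card)
    (hl : ∀ j ∈ J, τ ≤ |l j|) :
    ∑ x : ι → Bool, ind (|α + ∑ j, l j * rad (x j)| < τ) ≤
      (Fintype.card (ι → Bool) : ℝ) / √t := by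
  classical
  set e := Equiv.piEquivPiSubtypeProd (fun i => i ∈ J) (fun _ => Bool)
  rw [← Equiv.sum_comp e.symm, Fintype.sum_prod_type, sum_comm]
  have hcard : (Fintype.card (ι → Bool) : ℝ) =
      (Fintype.card ({i // i ∉ J} → Bool) : ℝ) * 2 ^ J.card := by
    rw [Fintype.card_congr e, Fintype.card_prod, mul_comm]
    simp
  have key : ∀ z : {i // i ∉ J} → Bool,
      ∑ w : {i // i ∈ J} → Bool, ind (|α + ∑ j, l j * rad (e.symm (w, z) j)| < τ) ≤
        2 ^ J.card / √t := by
    intro z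
    have h := littlewoodOfford_all (fun j : {i // i ∈ J} => l j)
      (α + ∑ j : {i // i ∉ J}, l j * rad (z j)) τ hτ (fun j => hl j j.2)
    rw [Fintype.card_coe] at h
    refine le_trans (le_of_eq ?_) (h.trans ?_)
    · refine sum_congr rfl fun w _ => ?_
      congr 3
      rw [← sum_add_sum_compl J, sum_subtype J (p := fun i => i ∈ J) (fun i => Iff.rfl),
        sum_subtype Jᶜ (p := fun i => i ∉ J) (fun i => mem_compl), add_assoc, add_comm (∑ _, _)]
      congr 2
      · refine sum_congr rfl fun j _ => ?_
        simp [e, Equiv.piEquivPiSubtypeProd, j.2]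
      · refine sum_congr rfl fun j _ => ?_
        simp [e, Equiv.piEquivPiSubtypeProd, j.2]
    · have : (t : ℝ) ≤ J.card + 1 := by exact_mod_cast hJ.trans (Nat.le_succ _)
      have ht' : (0 : ℝ) < t := by exact_mod_cast ht
      gcongr
  refine (sum_le_sum fun z _ => key z).trans (le_of_eq ?_)
  rw [sum_const, card_univ, nsmul_eq_mul, hcard]
  ring

/-! ### The moment bound over random tuples of indices -/

/-- If `G i` can be destroyed by changing the (at most two) coordinates in `D i`, while the other
`G k` do not depend on these coordinates, then each `G i` costs a factor `3/4`. -/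
lemma card_forall_le {ι Λ : Type*} [Fintype ι] [DecidableEq ι]
    (D : Λ → Finset ι) (G : Λ → (ι → Bool) → Prop) (I : Finset Λ)
    (hD : ∀ k ∈ I, (D k).card ≤ 2)
    (hindep : ∀ i ∈ I, ∀ k ∈ I, i ≠ k → ∀ x y : ι → Bool,
      (∀ v, v ∉ D k → x v = y v) → G i x → G i y)
    (hex : ∀ i ∈ I, ∀ x : ι → Bool, ∃ y : ι → Bool, (∀ v, v ∉ D i → y v = x v) ∧ ¬ G i y) :
    ∑ x, ind (∀ i ∈ I, G i x) ≤ (3 / 4 : ℝ) ^ I.card * (Fintype.card (ι → Bool) : ℝ) := by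
  classical
  induction I using Finset.induction_on with
  | empty =>
    simp [ind]
  | insert k I hk ih =>
    have ih' := ih (fun i hi => hD i (mem_insert_of_mem hi))
      (fun i hi k' hk' => hindep i (mem_insert_of_mem hi) k' (mem_insert_of_mem hk'))
      (fun i hi => hex i (mem_insert_of_mem hi))
    set S := univ.filter fun x : ι → Bool => ∀ i ∈ I, G i x with hS
    set S' := univ.filter fun x : ι → Bool => ∀ i ∈ insert k I, G i x with hS'
    rw [sum_ind] at ih' ⊢
    have hsub : S' ⊆ S := by
      intro x hx
      simp only [hS, hS', mem_filter, mem_univ, true_and] at hx ⊢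
      exact fun i hi => hx i (mem_insert_of_mem hi)
    choose y hy1 hy2 using hex k (mem_insert_self k I)
    have himg : S.image y ⊆ S \ S' := by
      intro x' hx'
      obtain ⟨x, hx, rfl⟩ := mem_image.1 hx'
      simp only [hS, hS', mem_sdiff, mem_filter, mem_univ, true_and] at hx ⊢
      refine ⟨fun i hi => ?_, fun h => hy2 x (h k (mem_insert_self k I))⟩
      refine hindep i (mem_insert_of_mem hi) k (mem_insert_self k I) ?_ x (y x)
        (fun v hv => (hy1 x v hv).symm) (hx i hi)
      rintro rfl
      exact hk hi
    have hfib : S.card ≤ 4 * (S.image y).card := by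
      refine card_le_mul_card_image S 4 fun b _ => ?_
      -- A point of the fibre is determined by its restriction to `D k`.
      have hinj : Set.InjOn (fun (a : ι → Bool) (v : {v // v ∈ D k}) => a v)
          (↑(S.filter fun a => y a = b) : Set (ι → Bool)) := by
        intro a ha a' ha' h
        simp only [coe_filter, Set.mem_ofPred_eq] at ha ha'
        funext v
        by_cases hv : v ∈ D k
        · exact congrFun h ⟨v, hv⟩
        · rw [← hy1 a v hv, ← hy1 a' v hv, ha.2, ha'.2]
      rw [← card_image_of_injOn hinj]
      refine (card_le_univ _).trans ?_
      simp only [Fintype.card_pi, Fintype.card_bool, prod_const, card_univ, Fintype.card_coe]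
      calc 2 ^ (D k).card ≤ 2 ^ 2 := Nat.pow_le_pow_right (by norm_num)
            (hD k (mem_insert_self k I))
        _ = 4 := by norm_num
    have h1 : S.card ≤ 4 * (S.card - S'.card) := by
      rw [← card_sdiff_of_subset hsub]
      exact hfib.trans (Nat.mul_le_mul_left 4 (card_le_card himg))
    have h2 : S'.card ≤ S.card := card_le_card hsub
    have h3 : (4 : ℝ) * S'.card ≤ 3 * S.card := by
      have : 4 * S'.card ≤ 3 * S.card := by omega
      exact_mod_cast this
    rw [card_insert_of_notMem hk, pow_succ]
    linarith

/-- A bound for the number of pairs of a `q`-tuple of indices and a point of the cube at which all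
the corresponding `f ℓ` are small. Each `f ℓ` is affine in the coordinates off `C ℓ`, and whatever
the other coordinates are, some choice of the (at most two) coordinates in `D ℓ ⊆ C ℓ` makes it large.

For each `x` and `ℓ`, either many of the coefficients `l ℓ j x` are at least `δ`, and then `f ℓ` is
unlikely to be small; or few of them are, and then the sets `D k` of the other members of a random
tuple are unlikely to meet `C ℓ` or these coefficients, so that the members of the tuple behave
independently. -/
lemma tuple_bound {ι Λ : Type*} [Fintype ι] [DecidableEq ι] [Fintype Λ] [DecidableEq Λ]
    (q s t : ℕ) (f : Λ → (ι → Bool) → ℝ) (C D : Λ → Finset ι)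
    (al : Λ → (ι → Bool) → ℝ) (l : Λ → ι → (ι → Bool) → ℝ) (κ δ : ℝ)
    (hδ : 0 < δ) (hδκ : (1 + 4 * q) * δ ≤ κ)
    (hal : ∀ ℓ x y, (∀ v ∈ C ℓ, x v = y v) → al ℓ x = al ℓ y)
    (hl : ∀ ℓ j x y, (∀ v ∈ C ℓ, x v = y v) → l ℓ j x = l ℓ j y)
    (hf : ∀ ℓ x, f ℓ x = al ℓ x + ∑ j ∈ (C ℓ)ᶜ, l ℓ j x * rad (x j))
    (hDC : ∀ ℓ, D ℓ ⊆ C ℓ) (hD2 : ∀ ℓ, (D ℓ).card ≤ 2)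
    (hDd : ∀ ℓ k, ℓ ≠ k → Disjoint (D ℓ) (D k))
    (hCs : ∀ ℓ, (C ℓ).card ≤ s) (ht : 0 < t)
    (hH : ∀ (ℓ : Λ) (x : ι → Bool), ∃ y : ι → Bool, (∀ v, v ∉ D ℓ → y v = x v) ∧ κ ≤ |f ℓ y|)
    (hΛ : 0 < Fintype.card Λ) :
    ∑ g : Fin q → Λ, ∑ x, ind (∀ i, |f (g i) x| < δ) ≤
      (Fintype.card Λ : ℝ) ^ q * (Fintype.card (ι → Bool) : ℝ) *
        ((3 / 4) ^ q + q / √t + q ^ 2 * (s + t) / Fintype.card Λ) := by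
  classical
  set m : ℝ := (Fintype.card Λ : ℝ) with hm
  set N : ℝ := (Fintype.card (ι → Bool) : ℝ) with hN
  have hm0 : 0 < m := by rw [hm]; exact_mod_cast hΛ
  have hN0 : 0 ≤ N := Nat.cast_nonneg _
  let Hv : Λ → (ι → Bool) → Finset ι := fun ℓ x => (C ℓ)ᶜ.filter fun j => δ ≤ |l ℓ j x|
  let Tch : Λ → (ι → Bool) → Λ → Prop := fun ℓ x k => ∃ j ∈ D k, j ∈ C ℓ ∪ Hv ℓ x
  -- Rich coefficient sequences: Littlewood–Offord off `C ℓ`.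
  have hrich : ∀ ℓ, ∑ x, ind (t ≤ (Hv ℓ x).card ∧ |f ℓ x| < δ) ≤ N / √t := by
    intro ℓ
    have hst : 0 < √(t : ℝ) := Real.sqrt_pos.2 (by exact_mod_cast ht)
    have hmix : N * ∑ x, ind (t ≤ (Hv ℓ x).card ∧ |f ℓ x| < δ) ≤ N * (N / √t) := by
      rw [hN, ← sum_mix (C ℓ), ← hN]
      have hz : ∀ z : ι → Bool, ∑ w, ind (t ≤ (Hv ℓ (mix (C ℓ) z w)).card ∧
          |f ℓ (mix (C ℓ) z w)| < δ) ≤ N / √t := by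
        intro z
        have hag : ∀ w, ∀ v ∈ C ℓ, mix (C ℓ) z w v = z v := by
          intro w v hv; simp [mix, hv]
        have hHv : ∀ w, Hv ℓ (mix (C ℓ) z w) = Hv ℓ z := by
          intro w
          ext j
          simp only [Hv, mem_filter, hl ℓ j _ _ (hag w)]
        by_cases hr : t ≤ (Hv ℓ z).card
        · have hlo := littlewoodOfford (fun j => if j ∈ C ℓ then 0 else l ℓ j z) (al ℓ z) δ hδ t ht
            (Hv ℓ z) hr (by
              intro j hj
              simp only [Hv, mem_filter, mem_compl] at hj
              simpa [hj.1] using hj.2)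
          refine le_trans (sum_le_sum fun w _ => ind_mono fun h => ?_) hlo
          have h2 := h.2
          rw [hf, hal ℓ _ _ (hag w)] at h2
          convert h2 using 3
          rw [← sum_add_sum_compl (C ℓ), sum_eq_zero (s := C ℓ), zero_add]
          · refine sum_congr rfl fun j hj => ?_
            rw [mem_compl] at hj
            rw [hl ℓ j _ _ (hag w)]
            simp [mix, hj]
          · intro j hj
            simp [hj]
        · rw [sum_eq_zero]
          · positivity
          · intro w _
            apply ind_of_not
            rw [hHv]
            exact fun h => hr h.1
      refine (sum_le_sum fun z _ => hz z).trans (le_of_eq ?_)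
      rw [sum_const, card_univ, nsmul_eq_mul]
    have hNpos : 0 < N := by
      rw [hN]; exact_mod_cast Fintype.card_pos
    exact le_of_mul_le_mul_left hmix hNpos
  -- A poor `ℓ` touches few indices, because the sets `D k` are disjoint.
  have htouch : ∀ ℓ x, (Hv ℓ x).card < t → ∑ k, ind (Tch ℓ x k) ≤ s + t := by
    intro ℓ x hp
    rw [sum_ind]
    have hle : (univ.filter fun k => Tch ℓ x k).card ≤ (C ℓ ∪ Hv ℓ x).card := by
      rcases isEmpty_or_nonempty ι with hι | hι
      · rw [filter_false_of_mem]
        · simp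
        · rintro k - ⟨j, -⟩
          exact hι.elim j
      choose! φ hφ1 hφ2 using (fun k (hk : Tch ℓ x k) => hk)
      refine card_le_card_of_injOn φ (fun k hk => hφ2 k (by simpa using hk)) ?_
      intro k hk k' hk' h
      by_contra hne
      have h1 := hφ1 k (by simpa using hk)
      have h2 := hφ1 k' (by simpa using hk')
      rw [h] at h1
      exact disjoint_left.1 (hDd k k' hne) h1 h2
    have := hle.trans (card_union_le _ _)
    have h3 : (univ.filter fun k => Tch ℓ x k).card ≤ s + t := by
      have := hCs ℓ
      omega
    exact_mod_cast h3
  -- Poor and untouched tuples: the members are independent.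
  have hindep : ∀ g : Fin q → Λ, ∑ x, ind ((∀ i, |f (g i) x| < δ) ∧
      ∀ i j, i ≠ j → ¬ Tch (g i) x (g j)) ≤ (3 / 4) ^ q * N := by
    intro g
    by_cases hdis : ∀ i j, i ≠ j → Disjoint (D (g j)) (C (g i))
    -- `rs i x` forgets the private coordinates of the other members of the tuple.
    · let rs : Fin q → (ι → Bool) → ι → Bool := fun i x v =>
        if ∃ k, k ≠ i ∧ v ∈ D (g k) then false else x v
      have hpb := card_forall_le (fun i => D (g i)) (fun i x => |f (g i) (rs i x)| < κ)
        (univ : Finset (Fin q)) (fun i _ => hD2 _) (by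
          intro i _ k _ hik x y hxy h
          have : rs i x = rs i y := by
            funext v
            by_cases hv : ∃ k, k ≠ i ∧ v ∈ D (g k)
            · simp [rs, hv]
            · simp only [rs, hv, if_false]
              refine hxy v fun hv' => hv ⟨k, hik.symm, hv'⟩
          rwa [← this]) (by
          intro i _ x
          obtain ⟨y, hy1, hy2⟩ := hH (g i) (rs i x)
          refine ⟨fun v => if v ∈ D (g i) then y v else x v, fun v hv => by simp [hv], ?_⟩
          have : rs i (fun v => if v ∈ D (g i) then y v else x v) = y := by
            funext v
            by_cases hv : v ∈ D (g i)
            · have : ¬ ∃ k, k ≠ i ∧ v ∈ D (g k) := by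
                rintro ⟨k, hk, hvk⟩
                exact disjoint_left.1 (hdis i k hk.symm) hvk (hDC _ hv)
              simp only [rs, this, if_false, hv, if_true]
            · rw [hy1 v hv]
              simp [rs, hv]
          rw [this]
          exact not_lt.2 hy2)
      rw [card_univ, Fintype.card_fin] at hpb
      refine le_trans (sum_le_sum fun x _ => ind_mono fun h => ?_) hpb
      intro i _
      have hagr : ∀ v ∈ C (g i), rs i x v = x v := by
        intro v hv
        have : ¬ ∃ k, k ≠ i ∧ v ∈ D (g k) := by
          rintro ⟨k, hk, hvk⟩
          exact disjoint_left.1 (hdis i k hk.symm) hvk hv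
        simp only [rs, this, if_false]
      have hdiff : |f (g i) (rs i x) - f (g i) x| ≤ 4 * q * δ := by
        rw [hf, hf, hal _ _ _ hagr, add_sub_add_left_eq_sub, ← sum_sub_distrib]
        set W : Finset ι := (univ.erase i).biUnion fun k => D (g k) with hW
        have hWc : (W.card : ℝ) ≤ 2 * q := by
          have : W.card ≤ (univ.erase i : Finset (Fin q)).card * 2 :=
            card_biUnion_le_card_mul _ _ _ fun k _ => hD2 _
          have h2 : (univ.erase i : Finset (Fin q)).card ≤ q := by
            simp
          have h3 : W.card ≤ 2 * q := by omega
          exact_mod_cast h3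
        have hterm : ∀ j ∈ (C (g i))ᶜ, |l (g i) j (rs i x) * rad (rs i x j) -
            l (g i) j x * rad (x j)| ≤ if j ∈ W then 2 * δ else 0 := by
          intro j hj
          rw [hl _ _ _ _ hagr, ← mul_sub, abs_mul]
          by_cases hjW : j ∈ W
          · rw [if_pos hjW]
            obtain ⟨k, hk, hjk⟩ := mem_biUnion.1 hjW
            have hki : k ≠ i := (mem_erase.1 hk).1
            have hsmall : |l (g i) j x| < δ := by
              by_contra hcon
              refine h.2 i k hki.symm ⟨j, hjk, mem_union_right _ ?_⟩
              simp only [Hv, mem_filter]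
              exact ⟨hj, not_lt.1 hcon⟩
            have := abs_rad_sub_le (a := rs i x j) (b := x j)
            nlinarith [abs_nonneg (l (g i) j x), abs_nonneg (rad (rs i x j) - rad (x j))]
          · rw [if_neg hjW]
            have : rs i x j = x j := by
              have : ¬ ∃ k, k ≠ i ∧ j ∈ D (g k) := by
                rintro ⟨k, hk, hjk⟩
                exact hjW (mem_biUnion.2 ⟨k, mem_erase.2 ⟨hk, mem_univ _⟩, hjk⟩)
              simp only [rs, this, if_false]
            rw [this]
            simp
        calc _ ≤ ∑ j ∈ (C (g i))ᶜ, if j ∈ W then 2 * δ else 0 :=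
              (abs_sum_le_sum_abs _ _).trans (sum_le_sum hterm)
          _ ≤ ∑ j, if j ∈ W then 2 * δ else 0 := by
              refine sum_le_sum_of_subset_of_nonneg (subset_univ _) fun j _ _ => ?_
              split_ifs <;> positivity
          _ = W.card * (2 * δ) := by simp
          _ ≤ 2 * q * (2 * δ) := by gcongr
          _ = _ := by ring
      have h1 := h.1 i
      have h2 := abs_sub_abs_le_abs_sub (f (g i) (rs i x)) (f (g i) x)
      linarith
    · rw [sum_eq_zero]
      · positivity
      · intro x _
        refine ind_of_not fun h => hdis fun i j hij => ?_
        rw [disjoint_left]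
        intro v hv hv'
        exact h.2 i j hij ⟨v, hv, mem_union_left _ hv'⟩
  have hsplit : ∀ (g : Fin q → Λ) (x : ι → Bool), ind (∀ i, |f (g i) x| < δ) ≤
      ind ((∀ i, |f (g i) x| < δ) ∧ ∀ i j, i ≠ j → ¬ Tch (g i) x (g j)) +
      (∑ i, ind (t ≤ (Hv (g i) x).card ∧ |f (g i) x| < δ) +
        ∑ i, ∑ j, ind (i ≠ j ∧ (Hv (g i) x).card < t ∧ Tch (g i) x (g j))) := by
    intro g x
    refine le_trans (ind_le_add (q := (∀ i, |f (g i) x| < δ) ∧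
      ∀ i j, i ≠ j → ¬ Tch (g i) x (g j)) (r := (∃ i, t ≤ (Hv (g i) x).card ∧ |f (g i) x| < δ) ∨
        ∃ i, ∃ j, i ≠ j ∧ (Hv (g i) x).card < t ∧ Tch (g i) x (g j)) ?_) ?_
    · intro h
      by_contra hcon
      push Not at hcon
      obtain ⟨i, j, hij, htc⟩ := hcon.1 h
      by_cases hr : t ≤ (Hv (g i) x).card
      · exact absurd (h i) (not_lt.2 (hcon.2.1 i hr))
      · exact hcon.2.2 i j hij (not_le.1 hr) htc
    · gcongr
      refine (ind_le_add id).trans (add_le_add (ind_exists_le _) ?_)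
      exact (ind_exists_le _).trans (sum_le_sum fun i _ => ind_exists_le _)
  have hA : ∑ g : Fin q → Λ, ∑ x, ind ((∀ i, |f (g i) x| < δ) ∧
      ∀ i j, i ≠ j → ¬ Tch (g i) x (g j)) ≤ m ^ q * ((3 / 4) ^ q * N) := by
    refine (sum_le_sum fun g _ => hindep g).trans (le_of_eq ?_)
    simp [hm]
  have hB : ∑ g : Fin q → Λ, ∑ x, ∑ i, ind (t ≤ (Hv (g i) x).card ∧ |f (g i) x| < δ) ≤
      m ^ q * (q * (N / √t)) := by
    have : ∀ g : Fin q → Λ, ∑ x, ∑ i, ind (t ≤ (Hv (g i) x).card ∧ |f (g i) x| < δ) ≤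
        q * (N / √t) := by
      intro g
      rw [sum_comm]
      refine (sum_le_sum fun i _ => hrich (g i)).trans (le_of_eq ?_)
      simp
    refine (sum_le_sum fun g _ => this g).trans (le_of_eq ?_)
    simp [hm]
  have hCc : ∑ g : Fin q → Λ, ∑ x, ∑ i, ∑ j,
      ind (i ≠ j ∧ (Hv (g i) x).card < t ∧ Tch (g i) x (g j)) ≤
      m ^ q * (N * (q * (q * ((s + t) / m)))) := by
    have hij : ∀ (x : ι → Bool) (i j : Fin q), ∑ g : Fin q → Λ,
        ind (i ≠ j ∧ (Hv (g i) x).card < t ∧ Tch (g i) x (g j)) ≤ m ^ q * ((s + t) / m) := by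
      intro x i j
      have hres := sum_update j (fun g : Fin q → Λ =>
        ind (i ≠ j ∧ (Hv (g i) x).card < t ∧ Tch (g i) x (g j)))
      have hle : ∀ g : Fin q → Λ, ∑ k, ind (i ≠ j ∧ (Hv (Function.update g j k i) x).card < t ∧
          Tch (Function.update g j k i) x (Function.update g j k j)) ≤ s + t := by
        intro g
        by_cases hne : i ≠ j
        · by_cases hp : (Hv (g i) x).card < t
          · refine le_trans (sum_le_sum fun k _ => ind_mono ?_) (htouch (g i) x hp)
            rw [Function.update_of_ne hne, Function.update_self]
            exact fun h => h.2.2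
          · rw [sum_eq_zero]
            · positivity
            · intro k _
              apply ind_of_not
              rw [Function.update_of_ne hne]
              exact fun h => hp h.2.1
        · rw [sum_eq_zero]
          · positivity
          · exact fun k _ => ind_of_not fun h => hne h.1
      have h2 := (sum_le_sum fun g (_ : g ∈ univ) => hle g)
      rw [hres] at h2
      rw [← mul_div_assoc, le_div_iff₀ hm0, mul_comm]
      refine h2.trans (le_of_eq ?_)
      rw [sum_const, card_univ, nsmul_eq_mul]
      simp [hm]
    rw [sum_comm]
    have hx : ∀ x : ι → Bool, ∑ g : Fin q → Λ, ∑ i, ∑ j,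
        ind (i ≠ j ∧ (Hv (g i) x).card < t ∧ Tch (g i) x (g j)) ≤
        q * (q * (m ^ q * ((s + t) / m))) := by
      intro x
      rw [sum_comm]
      have hi : ∀ i : Fin q, ∑ g : Fin q → Λ, ∑ j,
          ind (i ≠ j ∧ (Hv (g i) x).card < t ∧ Tch (g i) x (g j)) ≤
          q * (m ^ q * ((s + t) / m)) := by
        intro i
        rw [sum_comm]
        refine (sum_le_sum fun j _ => hij x i j).trans (le_of_eq ?_)
        rw [sum_const, card_univ, Fintype.card_fin, nsmul_eq_mul]
      refine (sum_le_sum fun i _ => hi i).trans (le_of_eq ?_)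
      rw [sum_const, card_univ, Fintype.card_fin, nsmul_eq_mul]
    refine (sum_le_sum fun x _ => hx x).trans (le_of_eq ?_)
    rw [sum_const, card_univ, nsmul_eq_mul]
    ring
  calc _ ≤ ∑ g : Fin q → Λ, ∑ x, _ := sum_le_sum fun g _ => sum_le_sum fun x _ => hsplit g x
    _ = _ := by simp only [sum_add_distrib]
    _ ≤ _ := add_le_add hA (add_le_add hB hCc)
    _ = _ := by ring

/-- Markov's inequality for the `q`-th moment of the number of small `f ℓ x`. -/
lemma tail_of_tuple_bound {Ω Λ : Type*} [Fintype Ω] [Fintype Λ] (q : ℕ) (f : Λ → Ω → ℝ) (δ η : ℝ)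
    (hΛ : 0 < Fintype.card Λ)
    (h : ∑ g : Fin q → Λ, ∑ x, ind (∀ i, |f (g i) x| < δ) ≤
      (Fintype.card Λ : ℝ) ^ q * (Fintype.card Ω : ℝ) * η) :
    ∑ x, ind (∑ ℓ, ind (δ ≤ |f ℓ x|) < (Fintype.card Λ : ℝ) / 18) ≤
      (18 / 17) ^ q * η * (Fintype.card Ω : ℝ) := by
  set m : ℝ := (Fintype.card Λ : ℝ) with hm
  have hm0 : 0 < m := by rw [hm]; exact_mod_cast hΛ
  have hx : ∀ x, ind (∑ ℓ, ind (δ ≤ |f ℓ x|) < m / 18) * (17 / 18 * m) ^ q ≤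
      ∑ g : Fin q → Λ, ind (∀ i, |f (g i) x| < δ) := by
    intro x
    have e : ∑ g : Fin q → Λ, ind (∀ i, |f (g i) x| < δ) = (∑ ℓ, ind (|f ℓ x| < δ)) ^ q := by
      rw [Fintype.sum_pow]
      exact sum_congr rfl fun g _ => ind_forall _
    rw [e]
    have e2 : ∑ ℓ, ind (|f ℓ x| < δ) = m - ∑ ℓ, ind (δ ≤ |f ℓ x|) := by
      rw [eq_sub_iff_add_eq, ← sum_add_distrib, hm, ← card_univ, card_eq_sum_ones]
      push_cast
      refine sum_congr rfl fun ℓ _ => ?_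
      rw [← not_lt, ind_not]; ring
    by_cases hb : ∑ ℓ, ind (δ ≤ |f ℓ x|) < m / 18
    · rw [ind_of hb, one_mul, e2]
      refine pow_le_pow_left₀ (by positivity) ?_ q
      linarith
    · rw [ind_of_not hb, zero_mul]
      exact pow_nonneg (sum_nonneg fun ℓ _ => ind_nonneg _) q
  have h2 := (sum_le_sum fun x (_ : x ∈ univ) => hx x)
  rw [sum_comm, ← sum_mul] at h2
  have h3 := h2.trans h
  rw [← le_div_iff₀ (by positivity)] at h3
  refine h3.trans (le_of_eq ?_)
  rw [mul_pow]
  have : (17 / 18 : ℝ) ^ q * (18 / 17) ^ q = 1 := by rw [← mul_pow]; norm_num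
  field_simp
  rw [mul_assoc, this, mul_one]

lemma eventually_le_rpow (K c : ℝ) (hc : 0 < c) : ∃ M₀ : ℕ, ∀ m : ℕ, M₀ ≤ m → K ≤ (m : ℝ) ^ c := by
  have h := ((tendsto_rpow_atTop hc).comp tendsto_natCast_atTop_atTop).eventually_ge_atTop K
  exact Filter.eventually_atTop.1 h

/-- With tuples of length about `log m` the moment bound yields a polynomially small failure
probability. -/
lemma numeric_bound : ∃ M₀ : ℕ, 1 ≤ M₀ ∧ ∀ m : ℕ, M₀ ≤ m → ∃ q t : ℕ, 0 < t ∧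
    (1 + 4 * (q : ℝ)) ≤ m ∧ ∀ s : ℕ, (s : ℝ) ≤ 10 * (m : ℝ) ^ (3 / 4 : ℝ) →
      (18 / 17 : ℝ) ^ q * ((3 / 4) ^ q + q / √t + q ^ 2 * (s + t) / m) ≤
        (m : ℝ) ^ (-(1 / 7) : ℝ) := by
  obtain ⟨M₀, hM₀⟩ := eventually_le_rpow 1000000 (1 / 50) (by norm_num)
  refine ⟨M₀ + 1, by omega, fun m hm => ?_⟩
  have hK := hM₀ m (by omega)
  have hm1 : (1 : ℝ) ≤ m := by exact_mod_cast (by omega : 1 ≤ m)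
  have hm0 : (0 : ℝ) < m := by linarith
  set μ : ℝ := (m : ℝ) with hμ
  refine ⟨⌈Real.log μ⌉₊, ⌈√μ⌉₊, Nat.ceil_pos.2 (Real.sqrt_pos.2 hm0), ?_, ?_⟩
  all_goals
    have hlog0 : 0 ≤ Real.log μ := Real.log_nonneg hm1
    have hq1 : Real.log μ ≤ (⌈Real.log μ⌉₊ : ℝ) := Nat.le_ceil _
    have hq2 : (⌈Real.log μ⌉₊ : ℝ) ≤ Real.log μ + 1 := (Nat.ceil_lt_add_one hlog0).le
    have hlog : Real.log μ ≤ μ ^ (1 / 100 : ℝ) / (1 / 100) :=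
      Real.log_le_rpow_div hm0.le (by norm_num)
    have hone : (1 : ℝ) ≤ μ ^ (1 / 100 : ℝ) := Real.one_le_rpow hm1 (by norm_num)
    have hq3 : (⌈Real.log μ⌉₊ : ℝ) ≤ 101 * μ ^ (1 / 100 : ℝ) := by linarith
    set q := ⌈Real.log μ⌉₊
  · have : μ ^ (1 / 100 : ℝ) * μ ^ (1 / 50 : ℝ) ≤ μ := by
      rw [← Real.rpow_add hm0]
      calc _ ≤ μ ^ (1 : ℝ) := Real.rpow_le_rpow_of_exponent_le hm1 (by norm_num)
        _ = μ := Real.rpow_one _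
    nlinarith
  · intro s hs
    have ht1 : √μ ≤ (⌈√μ⌉₊ : ℝ) := Nat.le_ceil _
    have ht2 : (⌈√μ⌉₊ : ℝ) ≤ √μ + 1 := (Nat.ceil_lt_add_one (Real.sqrt_nonneg _)).le
    set t := ⌈√μ⌉₊
    have h34 : (1 : ℝ) ≤ μ ^ (3 / 4 : ℝ) := Real.one_le_rpow hm1 (by norm_num)
    have hst : (s : ℝ) + t ≤ 12 * μ ^ (3 / 4 : ℝ) := by
      have : √μ ≤ μ ^ (3 / 4 : ℝ) := by
        rw [Real.sqrt_eq_rpow]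
        exact Real.rpow_le_rpow_of_exponent_le hm1 (by norm_num)
      linarith
    have hsq : μ ^ (1 / 4 : ℝ) ≤ √t := by
      have : μ ^ (1 / 4 : ℝ) = √(√μ) := by
        rw [Real.sqrt_eq_rpow, Real.sqrt_eq_rpow, ← Real.rpow_mul hm0.le]
        norm_num
      rw [this]
      exact Real.sqrt_le_sqrt ht1
    have hA : (18 / 17 : ℝ) ^ q * (3 / 4) ^ q ≤ μ ^ (-(1 / 5) : ℝ) := by
      have h1 : (18 / 17 : ℝ) * (3 / 4) ≤ Real.exp (-(1 / 5)) := by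
        have := Real.add_one_le_exp (-(1 / 5) : ℝ)
        linarith
      rw [← mul_pow]
      calc _ ≤ (Real.exp (-(1 / 5))) ^ q := pow_le_pow_left₀ (by norm_num) h1 q
        _ = Real.exp (q * (-(1 / 5))) := (Real.exp_nat_mul _ _).symm
        _ ≤ Real.exp (Real.log μ * (-(1 / 5))) := Real.exp_le_exp.2 (by linarith)
        _ = _ := (Real.rpow_def_of_pos hm0 _).symm
    have hB : (18 / 17 : ℝ) ^ q ≤ 3 * μ ^ (1 / 17 : ℝ) := by
      have h1 : (18 / 17 : ℝ) ≤ Real.exp (1 / 17) := by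
        have := Real.add_one_le_exp (1 / 17 : ℝ)
        linarith
      calc _ ≤ (Real.exp (1 / 17)) ^ q := pow_le_pow_left₀ (by norm_num) h1 q
        _ = Real.exp (q * (1 / 17)) := (Real.exp_nat_mul _ _).symm
        _ ≤ Real.exp (1 + Real.log μ * (1 / 17)) := Real.exp_le_exp.2 (by linarith)
        _ = Real.exp 1 * μ ^ (1 / 17 : ℝ) := by rw [Real.exp_add, Real.rpow_def_of_pos hm0]
        _ ≤ _ := by
          have := Real.exp_one_lt_d9
          gcongr
          linarith
    have hp14 : 0 < μ ^ (1 / 4 : ℝ) := Real.rpow_pos_of_pos hm0 _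
    have hC : (q : ℝ) / √t ≤ 101 * μ ^ (-(23 / 100) : ℝ) := by
      calc (q : ℝ) / √t ≤ 101 * μ ^ (1 / 100 : ℝ) / μ ^ (1 / 4 : ℝ) := by gcongr
        _ = 101 * μ ^ (-(24 / 100) : ℝ) := by
          rw [mul_div_assoc, ← Real.rpow_sub hm0]; norm_num
        _ ≤ _ := by
          refine mul_le_mul_of_nonneg_left ?_ (by norm_num)
          exact Real.rpow_le_rpow_of_exponent_le hm1 (by norm_num)
    have hD : (q : ℝ) ^ 2 * (s + t) / μ ≤ 122412 * μ ^ (-(23 / 100) : ℝ) := by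
      calc (q : ℝ) ^ 2 * (s + t) / μ
          ≤ (101 * μ ^ (1 / 100 : ℝ)) ^ 2 * (12 * μ ^ (3 / 4 : ℝ)) / μ := by gcongr
        _ = 122412 * ((μ ^ (1 / 100 : ℝ)) ^ 2 * μ ^ (3 / 4 : ℝ) / μ) := by ring
        _ = _ := by
          congr 1
          rw [← Real.rpow_natCast, ← Real.rpow_mul hm0.le, ← Real.rpow_add hm0]
          nth_rewrite 2 [← Real.rpow_one μ]
          rw [← Real.rpow_sub hm0]
          norm_num
    have hE : μ ^ (1 / 17 : ℝ) * μ ^ (-(23 / 100) : ℝ) ≤ μ ^ (-(17 / 100) : ℝ) := by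
      rw [← Real.rpow_add hm0]
      exact Real.rpow_le_rpow_of_exponent_le hm1 (by norm_num)
    have hF : μ ^ (-(1 / 5) : ℝ) ≤ μ ^ (-(17 / 100) : ℝ) :=
      Real.rpow_le_rpow_of_exponent_le hm1 (by norm_num)
    have hG : μ ^ (1 / 50 : ℝ) * μ ^ (-(17 / 100) : ℝ) ≤ μ ^ (-(1 / 7) : ℝ) := by
      rw [← Real.rpow_add hm0]
      exact Real.rpow_le_rpow_of_exponent_le hm1 (by norm_num)
    have hp23 : 0 < μ ^ (-(23 / 100) : ℝ) := Real.rpow_pos_of_pos hm0 _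
    have hp17 : 0 < μ ^ (-(17 / 100) : ℝ) := Real.rpow_pos_of_pos hm0 _
    calc (18 / 17 : ℝ) ^ q * ((3 / 4) ^ q + q / √t + q ^ 2 * (s + t) / μ)
        = (18 / 17 : ℝ) ^ q * (3 / 4) ^ q +
          (18 / 17 : ℝ) ^ q * (q / √t + q ^ 2 * (s + t) / μ) := by ring
      _ ≤ μ ^ (-(1 / 5) : ℝ) + 3 * μ ^ (1 / 17 : ℝ) *
          (101 * μ ^ (-(23 / 100) : ℝ) + 122412 * μ ^ (-(23 / 100) : ℝ)) := by gcongr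
      _ = μ ^ (-(1 / 5) : ℝ) +
          367539 * (μ ^ (1 / 17 : ℝ) * μ ^ (-(23 / 100) : ℝ)) := by ring
      _ ≤ μ ^ (-(17 / 100) : ℝ) + 367539 * μ ^ (-(17 / 100) : ℝ) := by gcongr
      _ ≤ 1000000 * μ ^ (-(17 / 100) : ℝ) := by linarith
      _ ≤ μ ^ (1 / 50 : ℝ) * μ ^ (-(17 / 100) : ℝ) := by gcongr
      _ ≤ _ := hG

/-- Families of functions that are affine in the coordinates off small sets `C ℓ` and that can
always be made large by changing the coordinates in `D ℓ`: with high probability a positive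
proportion of them is not small. -/
lemma tail_affine_off : ∃ M₀ : ℕ, 1 ≤ M₀ ∧ ∀ {ι Λ : Type} [Fintype ι] [DecidableEq ι] [Fintype Λ]
    [DecidableEq Λ] (f : Λ → (ι → Bool) → ℝ) (C D : Λ → Finset ι)
    (al : Λ → (ι → Bool) → ℝ) (l : Λ → ι → (ι → Bool) → ℝ) (κ n : ℝ),
    0 < κ → M₀ ≤ Fintype.card Λ → (Fintype.card Λ : ℝ) ≤ n →
    (∀ ℓ x y, (∀ v ∈ C ℓ, x v = y v) → al ℓ x = al ℓ y) →
    (∀ ℓ j x y, (∀ v ∈ C ℓ, x v = y v) → l ℓ j x = l ℓ j y) →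
    (∀ ℓ x, f ℓ x = al ℓ x + ∑ j ∈ (C ℓ)ᶜ, l ℓ j x * rad (x j)) →
    (∀ ℓ, D ℓ ⊆ C ℓ) → (∀ ℓ, (D ℓ).card ≤ 2) →
    (∀ ℓ k, ℓ ≠ k → Disjoint (D ℓ) (D k)) →
    (∀ ℓ, ((C ℓ).card : ℝ) ≤ 10 * (Fintype.card Λ : ℝ) ^ (3 / 4 : ℝ)) →
    (∀ (ℓ : Λ) (x : ι → Bool), ∃ y : ι → Bool, (∀ v, v ∉ D ℓ → y v = x v) ∧ κ ≤ |f ℓ y|) →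
    ∑ x, ind (∑ ℓ, ind (κ / n ≤ |f ℓ x|) < (Fintype.card Λ : ℝ) / 18) ≤
      (Fintype.card Λ : ℝ) ^ (-(1 / 7) : ℝ) * (Fintype.card (ι → Bool) : ℝ) := by
  obtain ⟨M₀, h1, hM₀⟩ := numeric_bound
  refine ⟨M₀, h1, ?_⟩
  intro ι Λ _ _ _ _ f C D al l κ n hκ hcard hn hal hl hf hDC hD2 hDd hC hH
  obtain ⟨q, t, ht, hq, hnum⟩ := hM₀ _ hcard
  have hΛ : 0 < Fintype.card Λ := by omega
  have hn0 : 0 < n := lt_of_lt_of_le (by exact_mod_cast hΛ) hn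
  have hs : ∀ ℓ, (C ℓ).card ≤ ⌊10 * (Fintype.card Λ : ℝ) ^ (3 / 4 : ℝ)⌋₊ :=
    fun ℓ => Nat.le_floor (hC ℓ)
  have hb := tuple_bound q _ t f C D al l κ (κ / n) (by positivity) (by
    rw [← mul_div_assoc, div_le_iff₀ hn0, mul_comm]
    gcongr
    linarith) hal hl hf hDC hD2 hDd hs ht hH hΛ
  refine (tail_of_tuple_bound q f _ _ hΛ hb).trans ?_
  gcongr
  exact hnum _ (Nat.floor_le (by positivity))

/-! ### The quadratic Littlewood–Offord inequality -/

/-- The quadratic form `∑ S i j s_i s_j` in the signs `s_i` attached to a point of the cube, plus a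
constant `d`. -/
noncomputable def quad {ι : Type} [Fintype ι] (S : ι → ι → ℝ) (d : ℝ) (x : ι → Bool) : ℝ :=
  d + ∑ i, ∑ j, S i j * (rad (x i) * rad (x j))

lemma quad_split {ι : Type} [Fintype ι] [DecidableEq ι] (S : ι → ι → ℝ)
    (hS : ∀ i j, S i j = S j i) (d : ℝ) (C : Finset ι) (x : ι → Bool) :
    quad S d x = d + ∑ i ∈ C, ∑ j ∈ C, S i j * (rad (x i) * rad (x j)) +
      ∑ j ∈ Cᶜ, (2 * ∑ i ∈ C, S i j * rad (x i)) * rad (x j) +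
      ∑ i ∈ Cᶜ, ∑ j ∈ Cᶜ, S i j * (rad (x i) * rad (x j)) := by
  have h1 : ∀ i, ∑ j, S i j * (rad (x i) * rad (x j)) =
      ∑ j ∈ C, S i j * (rad (x i) * rad (x j)) + ∑ j ∈ Cᶜ, S i j * (rad (x i) * rad (x j)) :=
    fun i => (sum_add_sum_compl C _).symm
  have h2 : ∑ i ∈ C, ∑ j ∈ Cᶜ, S i j * (rad (x i) * rad (x j)) =
      ∑ j ∈ Cᶜ, (∑ i ∈ C, S i j * rad (x i)) * rad (x j) := by
    rw [sum_comm]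
    refine sum_congr rfl fun j _ => ?_
    rw [sum_mul]
    exact sum_congr rfl fun i _ => by ring
  have h3 : ∑ i ∈ Cᶜ, ∑ j ∈ C, S i j * (rad (x i) * rad (x j)) =
      ∑ j ∈ Cᶜ, (∑ i ∈ C, S i j * rad (x i)) * rad (x j) := by
    refine sum_congr rfl fun j _ => ?_
    rw [sum_mul]
    exact sum_congr rfl fun i _ => by rw [hS j i]; ring
  have h4 : ∑ j ∈ Cᶜ, (2 * ∑ i ∈ C, S i j * rad (x i)) * rad (x j) =
      2 * ∑ j ∈ Cᶜ, (∑ i ∈ C, S i j * rad (x i)) * rad (x j) := by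
    rw [mul_sum]
    exact sum_congr rfl fun j _ => by ring
  rw [quad, ← sum_add_sum_compl C]
  simp only [h1, sum_add_distrib]
  rw [h2, h3, h4]
  ring

/-- Small-ball bound for a quadratic form with a matching `u ↦ φ u` of large coefficients.
Two independent copies of the coordinates in `U` are compared; the difference is affine in the
coordinates off `U`, and its coefficients are affine forms in the coordinates in `U` to which
`tail_affine_off` applies. -/
lemma quad_smallBall : ∃ M₀ : ℕ, 1 ≤ M₀ ∧ ∀ {ι : Type} [Fintype ι] [DecidableEq ι]
    (S : ι → ι → ℝ) (d τ n : ℝ) (U : Finset ι) (φ : ι → ι), (∀ i j, S i j = S j i) →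
    0 < τ → M₀ ≤ U.card → (U.card : ℝ) ≤ n → Set.InjOn φ U → Disjoint U (U.image φ) →
    (∀ u ∈ U, τ ≤ |S u (φ u)|) →
    (∑ x, ind (|quad S d x| < τ / n)) ^ 2 ≤ (Fintype.card (ι → Bool) : ℝ) ^ 2 *
      ((U.card : ℝ) ^ (-(1 / 7) : ℝ) + 1 / √(⌈(U.card : ℝ) / 18⌉₊ : ℝ)) := by
  obtain ⟨M₀, h1, hM₀⟩ := tail_affine_off
  refine ⟨M₀, h1, ?_⟩
  intro ι _ _ S d τ n U φ hS hτ hU hn hφ hdisj hheavy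
  set N : ℝ := (Fintype.card (ι → Bool) : ℝ) with hN
  have hN0 : 0 < N := by rw [hN]; exact_mod_cast Fintype.card_pos
  set r : ℝ := (U.card : ℝ) with hr
  have hr0 : 0 < r := by rw [hr]; exact_mod_cast (by omega : 0 < U.card)
  have hn0 : 0 < n := hr0.trans_le hn
  set δ := τ / n with hδ
  have hδ0 : 0 < δ := by positivity
  set t₀ := ⌈r / 18⌉₊ with ht₀
  have ht₀0 : 0 < t₀ := Nat.ceil_pos.2 (by positivity)
  -- `2 * R j w w'` is the coefficient of the sign of `j ∉ U` in the difference of the form at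
  -- points which are `w`, respectively `w'`, on `U` and agree off `U`.
  let R : ι → (ι → Bool) → (ι → Bool) → ℝ := fun j w w' =>
    ∑ u ∈ U, S u j * (rad (w u) - rad (w' u))
  let few : (ι → Bool) → (ι → Bool) → Prop := fun w w' =>
    ∑ u : {u // u ∈ U}, ind (δ ≤ |R (φ u) w w'|) < r / 18
  have hφU : ∀ u ∈ U, φ u ∉ U := fun u hu h =>
    disjoint_left.1 hdisj h (mem_image_of_mem φ hu)
  have hfew : ∀ w', ∑ w, ind (few w w') ≤ r ^ (-(1 / 7) : ℝ) * N := by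
    intro w'
    have hc : Fintype.card {u // u ∈ U} = U.card := Fintype.card_coe U
    have h := hM₀ (ι := ι) (Λ := {u // u ∈ U}) (fun u w => R (φ u) w w') (fun u => {u.1})
      (fun u => {u.1})
      (fun u w => S u (φ u) * rad (w u) - ∑ v ∈ U, S v (φ u) * rad (w' v))
      (fun u j _ => if j ∈ U then S j (φ u) else 0) τ n hτ (by rw [hc]; exact hU)
      (by rw [hc]; exact hn)
      (by
        intro u x y hxy
        rw [hxy u.1 (mem_singleton_self _)])
      (fun _ _ _ _ _ => rfl)
      (by
        intro u x
        have e : ∑ j ∈ ({u.1} : Finset ι)ᶜ, (if j ∈ U then S j (φ u) else 0) * rad (x j) =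
            ∑ v ∈ U, S v (φ u) * rad (x v) - S u (φ u) * rad (x u) := by
          rw [eq_sub_iff_add_eq, add_comm, ← sum_singleton
            (fun j => S j (φ u) * rad (x j)) u.1]
          have : ∑ j ∈ ({u.1} : Finset ι), S j (φ u) * rad (x j) =
              ∑ j ∈ ({u.1} : Finset ι), (if j ∈ U then S j (φ u) else 0) * rad (x j) := by
            simp [u.2]
          rw [this, sum_add_sum_compl]
          simp [ite_mul, sum_ite_mem]
        rw [e]
        simp only [R, mul_sub, sum_sub_distrib]
        ring)
      (fun _ => Subset.refl _) (fun _ => by simp)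
      (by
        intro u v huv
        rw [disjoint_singleton]
        exact fun h => huv (Subtype.ext h))
      (by
        intro u
        rw [hc, card_singleton, Nat.cast_one]
        have : (1 : ℝ) ≤ (U.card : ℝ) ^ (3 / 4 : ℝ) :=
          Real.one_le_rpow (by exact_mod_cast (by omega : 1 ≤ U.card)) (by norm_num)
        linarith)
      (by
        intro u x
        have e : R (φ u) (Function.update x u true) w' - R (φ u) (Function.update x u false) w' =
            2 * S u (φ u) := by
          simp only [R]
          rw [← sum_sub_distrib, sum_eq_single u.1]
          · simp [rad]; ring
          · intro v _ hv
            simp [Function.update_of_ne hv]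
          · exact fun h => absurd u.2 h
        have hb := hheavy u u.2
        have : τ ≤ |R (φ u) (Function.update x u true) w'| ∨
            τ ≤ |R (φ u) (Function.update x u false) w'| := by
          by_contra hcon
          push Not at hcon
          have h3 := abs_sub (R (φ u) (Function.update x u true) w')
            (R (φ u) (Function.update x u false) w')
          rw [e, abs_mul, abs_two] at h3
          linarith [hcon.1, hcon.2]
        rcases this with h | h
        · exact ⟨_, fun v hv => Function.update_of_ne (by simpa using hv) _ _, h⟩
        · exact ⟨_, fun v hv => Function.update_of_ne (by simpa using hv) _ _, h⟩)
    rw [hc] at h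
    exact h
  -- Unless few coefficients `R (φ u) w w'` are large, Littlewood–Offord applies to the difference.
  have hz : ∀ w w', ∑ z, ind (|quad S d (mix U w z) - quad S d (mix U w' z)| < 2 * δ) ≤
      N * ind (few w w') + N / √t₀ := by
    intro w w'
    by_cases hf : few w w'
    · rw [ind_of hf, mul_one]
      have : ∑ z : ι → Bool, ind (|quad S d (mix U w z) - quad S d (mix U w' z)| < 2 * δ) ≤ N := by
        refine (sum_le_sum fun z _ => ind_le_one _).trans (le_of_eq ?_)
        simp [hN]
      have h2 : 0 ≤ N / √t₀ := by positivity
      linarith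
    · rw [ind_of_not hf, mul_zero, zero_add]
      set J := Uᶜ.filter fun j => δ ≤ |R j w w'| with hJ
      have hJc : t₀ ≤ J.card := by
        rw [ht₀, Nat.ceil_le]
        refine (not_lt.1 hf).trans ?_
        rw [sum_ind]
        norm_cast
        refine card_le_card_of_injOn (fun u => φ u.1) ?_ ?_
        · intro u hu
          simp only [coe_filter, mem_univ, true_and, Set.mem_ofPred_eq] at hu
          simp only [hJ, coe_filter, mem_compl, Set.mem_ofPred_eq]
          exact ⟨hφU u u.2, hu⟩
        · intro u _ v _ huv
          exact Subtype.ext (hφ u.2 v.2 huv)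
      have hlo := littlewoodOfford (fun j => if j ∈ U then 0 else 2 * R j w w')
        (∑ i ∈ U, ∑ j ∈ U, S i j * (rad (w i) * rad (w j)) -
          ∑ i ∈ U, ∑ j ∈ U, S i j * (rad (w' i) * rad (w' j))) (2 * δ) (by positivity) t₀ ht₀0 J hJc
        (by
          intro j hj
          simp only [hJ, mem_filter, mem_compl] at hj
          simp only [hj.1, if_false, abs_mul, abs_two]
          linarith [hj.2])
      refine le_trans (le_of_eq ?_) hlo
      refine sum_congr rfl fun z _ => ?_
      congr 3
      have hin : ∀ (y : ι → Bool), ∀ i ∈ U, mix U y z i = y i := fun y i hi => by simp [mix, hi]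
      have hout : ∀ (y : ι → Bool), ∀ i ∈ Uᶜ, mix U y z i = z i := fun y i hi => by
        rw [mem_compl] at hi; simp [mix, hi]
      have e1 : ∀ y : ι → Bool, quad S d (mix U y z) =
          d + ∑ i ∈ U, ∑ j ∈ U, S i j * (rad (y i) * rad (y j)) +
          ∑ j ∈ Uᶜ, (2 * ∑ i ∈ U, S i j * rad (y i)) * rad (z j) +
          ∑ i ∈ Uᶜ, ∑ j ∈ Uᶜ, S i j * (rad (z i) * rad (z j)) := by
        intro y
        rw [quad_split S hS d U]
        congr 1
        · congr 1
          · congr 1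
            exact sum_congr rfl fun i hi => sum_congr rfl fun j hj => by
              rw [hin y i hi, hin y j hj]
          · refine sum_congr rfl fun j hj => ?_
            rw [hout y j hj]
            congr 2
            exact sum_congr rfl fun i hi => by rw [hin y i hi]
        · exact sum_congr rfl fun i hi => sum_congr rfl fun j hj => by
            rw [hout y i hi, hout y j hj]
      have e2 : ∑ j, (if j ∈ U then 0 else 2 * R j w w') * rad (z j) =
          ∑ j ∈ Uᶜ, (2 * ∑ i ∈ U, S i j * rad (w i)) * rad (z j) -
          ∑ j ∈ Uᶜ, (2 * ∑ i ∈ U, S i j * rad (w' i)) * rad (z j) := by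
        rw [← sum_add_sum_compl U, sum_eq_zero (s := U), zero_add, ← sum_sub_distrib]
        · refine sum_congr rfl fun j hj => ?_
          rw [if_neg (mem_compl.1 hj)]
          simp only [R, mul_sub, sum_sub_distrib]
          ring
        · intro j hj
          simp [hj]
      rw [e1, e1, e2]
      ring
  set X := ∑ x, ind (|quad S d x| < δ) with hX
  have hmix : ∑ z : ι → Bool, ∑ w, ind (|quad S d (mix U w z)| < δ) = N * X := by
    rw [sum_comm]
    exact sum_mix U fun x => ind (|quad S d x| < δ)
  -- Decoupling by the Cauchy–Schwarz inequality.
  have hCS : (N * X) ^ 2 ≤ N * ∑ z : ι → Bool, (∑ w, ind (|quad S d (mix U w z)| < δ)) ^ 2 := by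
    rw [← hmix]
    have := sq_sum_le_card_mul_sum_sq (s := (univ : Finset (ι → Bool)))
      (f := fun z => ∑ w, ind (|quad S d (mix U w z)| < δ))
    rwa [card_univ] at this
  have hT : ∑ z : ι → Bool, (∑ w, ind (|quad S d (mix U w z)| < δ)) ^ 2 ≤
      N * (N * (N * (r ^ (-(1 / 7) : ℝ)) + N / √t₀)) := by
    calc ∑ z : ι → Bool, (∑ w, ind (|quad S d (mix U w z)| < δ)) ^ 2
        ≤ ∑ z : ι → Bool, ∑ w', ∑ w,
            ind (|quad S d (mix U w z) - quad S d (mix U w' z)| < 2 * δ) := by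
          refine sum_le_sum fun z _ => ?_
          rw [sq, sum_mul_sum, sum_comm]
          refine sum_le_sum fun w' _ => sum_le_sum fun w _ => ?_
          rw [← ind_and]
          refine ind_mono fun h => ?_
          have := abs_sub (quad S d (mix U w z)) (quad S d (mix U w' z))
          linarith [h.1, h.2]
      _ = ∑ w', ∑ w, ∑ z : ι → Bool,
            ind (|quad S d (mix U w z) - quad S d (mix U w' z)| < 2 * δ) := by
          rw [sum_comm]
          exact sum_congr rfl fun w' _ => sum_comm
      _ ≤ ∑ w', ∑ w, (N * ind (few w w') + N / √t₀) :=
          sum_le_sum fun w' _ => sum_le_sum fun w _ => hz w w'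
      _ ≤ ∑ w' : ι → Bool, (N * (r ^ (-(1 / 7) : ℝ) * N) + N * (N / √t₀)) := by
          refine sum_le_sum fun w' _ => ?_
          rw [sum_add_distrib, ← mul_sum, sum_const, card_univ, nsmul_eq_mul]
          gcongr
          exact hfew w'
      _ = _ := by
          rw [sum_const, card_univ, nsmul_eq_mul]
          ring
  have hfin : N ^ 2 * X ^ 2 ≤ N ^ 2 * (N ^ 2 * (r ^ (-(1 / 7) : ℝ) + 1 / √(t₀ : ℝ))) := by
    calc N ^ 2 * X ^ 2 = (N * X) ^ 2 := by ring
      _ ≤ _ := hCS.trans (mul_le_mul_of_nonneg_left hT hN0.le)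
      _ = _ := by ring
  exact le_of_mul_le_mul_left hfin (by positivity)

/-- Either the graph of large off-diagonal coefficients has a matching with `r` edges, or it has a
vertex cover with at most `2 * r` vertices. -/
lemma matching_or_cover {ι : Type} [DecidableEq ι] (S : ι → ι → ℝ) (τ : ℝ) (r : ℕ) :
    (∃ (U : Finset ι) (φ : ι → ι), U.card = r ∧ Set.InjOn φ U ∧ Disjoint U (U.image φ) ∧
      ∀ u ∈ U, τ ≤ |S u (φ u)|) ∨
    ∃ C : Finset ι, C.card ≤ 2 * r ∧ ∀ i, i ∉ C → ∀ j, j ∉ C → i ≠ j → |S i j| < τ := by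
  induction r with
  | zero => exact Or.inl ⟨∅, id, by simp⟩
  | succ r ih =>
    rcases ih with ⟨U, φ, hc, hinj, hd, hh⟩ | ⟨C, hC, hcov⟩
    · by_cases hcov : ∀ i, i ∉ U ∪ U.image φ → ∀ j, j ∉ U ∪ U.image φ → i ≠ j → |S i j| < τ
      · refine Or.inr ⟨U ∪ U.image φ, ?_, hcov⟩
        have h1 := card_union_le U (U.image φ)
        have h2 := card_image_le (s := U) (f := φ)
        omega
      · push Not at hcov
        obtain ⟨i, hi, j, hj, hij, hτ⟩ := hcov
        simp only [mem_union, not_or] at hi hj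
        have hup : ∀ u ∈ U, Function.update φ i j u = φ u := fun u hu =>
          Function.update_of_ne (by rintro rfl; exact hi.1 hu) _ _
        have himg : (insert i U).image (Function.update φ i j) = insert j (U.image φ) := by
          rw [image_insert, Function.update_self]
          congr 1
          exact image_congr fun u hu => hup u hu
        refine Or.inl ⟨insert i U, Function.update φ i j, ?_, ?_, ?_, ?_⟩
        · rw [card_insert_of_notMem hi.1, hc]
        · rw [coe_insert, Set.injOn_insert (by simpa using hi.1)]
          refine ⟨fun u hu v hv h => ?_, ?_⟩
          · rw [hup u hu, hup v hv] at h
            exact hinj hu hv h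
          · rintro ⟨u, hu, h⟩
            rw [hup u hu, Function.update_self] at h
            exact hj.2 (h ▸ mem_image_of_mem φ hu)
        · rw [himg, disjoint_insert_left, disjoint_insert_right]
          refine ⟨?_, hj.1, hd⟩
          rw [mem_insert, not_or]
          exact ⟨hij, hi.2⟩
        · intro u hu
          rcases mem_insert.1 hu with rfl | hu
          · rwa [Function.update_self]
          · rw [hup u hu]
            exact hh u hu
    · exact Or.inr ⟨C, by omega, hcov⟩

/-! ### Families of quadratic forms -/

/-- The second difference of a quadratic form in the directions `a`, `b` is `8 * S a b`, so
changing these two coordinates suitably makes the form large. -/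
lemma quad_exists_large {ι : Type} [Fintype ι] [DecidableEq ι] (S : ι → ι → ℝ)
    (hS : ∀ i j, S i j = S j i) (d : ℝ) (a b : ι) (hab : a ≠ b) (x : ι → Bool) :
    ∃ y : ι → Bool, (∀ v, v ∉ ({a, b} : Finset ι) → y v = x v) ∧
      2 * |S a b| ≤ |quad S d y| := by
  let y : Bool → Bool → ι → Bool := fun p q => Function.update (Function.update x a p) b q
  have hya : ∀ p q, y p q a = p := fun p q => by
    simp only [y]; rw [Function.update_of_ne hab, Function.update_self]
  have hyb : ∀ p q, y p q b = q := fun p q => by simp only [y]; rw [Function.update_self]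
  have hyv : ∀ p q v, v ∉ ({a, b} : Finset ι) → y p q v = x v := fun p q v hv => by
    simp only [mem_insert, mem_singleton, not_or] at hv
    simp only [y]
    rw [Function.update_of_ne hv.2, Function.update_of_ne hv.1]
  have key : ∀ p q, quad S d (y p q) =
      (d + S a a * (rad p * rad p) + S b b * (rad q * rad q) + 2 * S a b * (rad p * rad q)) +
      rad p * (∑ j ∈ ({a, b} : Finset ι)ᶜ, 2 * S a j * rad (x j)) +
      rad q * (∑ j ∈ ({a, b} : Finset ι)ᶜ, 2 * S b j * rad (x j)) +
      ∑ i ∈ ({a, b} : Finset ι)ᶜ, ∑ j ∈ ({a, b} : Finset ι)ᶜ,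
        S i j * (rad (x i) * rad (x j)) := by
    intro p q
    rw [quad_split S hS d {a, b}]
    have h1 : ∑ j ∈ ({a, b} : Finset ι)ᶜ,
        (2 * ∑ i ∈ ({a, b} : Finset ι), S i j * rad (y p q i)) * rad (y p q j) =
        rad p * (∑ j ∈ ({a, b} : Finset ι)ᶜ, 2 * S a j * rad (x j)) +
        rad q * (∑ j ∈ ({a, b} : Finset ι)ᶜ, 2 * S b j * rad (x j)) := by
      rw [mul_sum, mul_sum, ← sum_add_distrib]
      refine sum_congr rfl fun j hj => ?_
      rw [sum_pair hab, hya, hyb, hyv p q j (by simpa using hj)]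
      ring
    have h2 : ∑ i ∈ ({a, b} : Finset ι)ᶜ, ∑ j ∈ ({a, b} : Finset ι)ᶜ,
        S i j * (rad (y p q i) * rad (y p q j)) =
        ∑ i ∈ ({a, b} : Finset ι)ᶜ, ∑ j ∈ ({a, b} : Finset ι)ᶜ,
        S i j * (rad (x i) * rad (x j)) := by
      refine sum_congr rfl fun i hi => sum_congr rfl fun j hj => ?_
      rw [hyv p q j (by simpa using hj), hyv p q i (by simpa using hi)]
    rw [h1, h2, sum_pair hab, sum_pair hab, sum_pair hab, hya, hyb, hS b a]
    ring
  have h8 : quad S d (y true true) - quad S d (y true false) - quad S d (y false true) +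
      quad S d (y false false) = 8 * S a b := by
    rw [key, key, key, key]
    simp only [rad]
    norm_num
    ring
  by_contra hcon
  push Not at hcon
  have c1 := hcon _ (hyv true true)
  have c2 := hcon _ (hyv true false)
  have c3 := hcon _ (hyv false true)
  have c4 := hcon _ (hyv false false)
  rw [abs_lt] at c1 c2 c3 c4
  rcases abs_cases (S a b) with ⟨h, _⟩ | ⟨h, _⟩ <;> rw [h] at c1 c2 c3 c4 <;> linarith

lemma abs_rad (b : Bool) : |rad b| = 1 := by cases b <;> simp [rad]

lemma rad_mul_self (b : Bool) : rad b * rad b = 1 := by cases b <;> simp [rad]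

/-- Families of quadratic forms whose large coefficients are covered by few variables: such a form
is, up to a small error, affine in the remaining variables. -/
lemma quad_family_cover : ∃ M₀ : ℕ, 1 ≤ M₀ ∧ ∀ {ι Λ : Type} [Fintype ι] [DecidableEq ι]
    [Fintype Λ] [DecidableEq Λ] (S : Λ → ι → ι → ℝ) (d : Λ → ℝ) (a b : Λ → ι)
    (C : Λ → Finset ι) (lam : ℝ), 0 < lam → (∀ ℓ i j, S ℓ i j = S ℓ j i) →
    (∀ ℓ, a ℓ ≠ b ℓ) →
    (∀ ℓ k, ℓ ≠ k → Disjoint ({a ℓ, b ℓ} : Finset ι) {a k, b k}) →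
    (∀ ℓ, lam / 3 ≤ |S ℓ (a ℓ) (b ℓ)|) → M₀ ≤ Fintype.card Λ →
    Fintype.card Λ ≤ Fintype.card ι →
    (∀ ℓ, ((C ℓ).card : ℝ) + 2 ≤ 10 * (Fintype.card Λ : ℝ) ^ (3 / 4 : ℝ)) →
    (∀ ℓ i, i ∉ C ℓ → ∀ j, j ∉ C ℓ → i ≠ j →
      |S ℓ i j| < lam / (4 * (Fintype.card ι : ℝ) ^ 3)) →
    ∑ x, ind (∑ ℓ, ind (lam / (4 * (Fintype.card ι : ℝ) ^ 4) ≤ |quad (S ℓ) (d ℓ) x|) <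
        (Fintype.card Λ : ℝ) / 18) ≤
      (Fintype.card Λ : ℝ) ^ (-(1 / 7) : ℝ) * (Fintype.card (ι → Bool) : ℝ) := by
  obtain ⟨M₀, h1, hM₀⟩ := tail_affine_off
  refine ⟨M₀, h1, ?_⟩
  intro ι Λ _ _ _ _ S d a b C lam hlam hS hab hdisj hheavy hcard hcn hC hcov
  set n : ℝ := (Fintype.card ι : ℝ) with hn
  have hn1 : 1 ≤ n := by rw [hn]; exact_mod_cast (by omega : 1 ≤ Fintype.card ι)
  have hn0 : 0 < n := by linarith
  let C' : Λ → Finset ι := fun ℓ => C ℓ ∪ {a ℓ, b ℓ}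
  -- the form with the negligible coefficients removed
  let T : Λ → ι → ι → ℝ := fun ℓ i j => if i ∉ C' ℓ ∧ j ∉ C' ℓ ∧ i ≠ j then 0 else S ℓ i j
  have hT : ∀ ℓ i j, T ℓ i j = T ℓ j i := by
    intro ℓ i j
    simp only [T]
    rw [hS ℓ i j]
    congr 1
    simp only [eq_iff_iff]
    tauto
  have hTC : ∀ ℓ i j, i ∈ C' ℓ → T ℓ i j = S ℓ i j := fun ℓ i j h => by
    simp only [T]
    rw [if_neg (by tauto)]
  have habs : ∀ ℓ x, |quad (S ℓ) (d ℓ) x - quad (T ℓ) (d ℓ) x| ≤ lam / (4 * n) := by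
    intro ℓ x
    have hent : ∀ i j, |S ℓ i j - T ℓ i j| ≤ lam / (4 * n ^ 3) := by
      intro i j
      simp only [T]
      split_ifs with h
      · simp only [C', mem_union, not_or] at h
        rw [sub_zero]
        exact (hcov ℓ i h.1.1 j h.2.1.1 h.2.2).le
      · rw [sub_self, abs_zero]; positivity
    have heq : quad (S ℓ) (d ℓ) x - quad (T ℓ) (d ℓ) x =
        ∑ i, ∑ j, (S ℓ i j - T ℓ i j) * (rad (x i) * rad (x j)) := by
      simp only [quad, sub_mul, sum_sub_distrib]
      ring
    rw [heq]
    calc _ ≤ ∑ i, ∑ j, |(S ℓ i j - T ℓ i j) * (rad (x i) * rad (x j))| :=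
          (abs_sum_le_sum_abs _ _).trans (sum_le_sum fun i _ => abs_sum_le_sum_abs _ _)
      _ ≤ ∑ _i : ι, ∑ _j : ι, lam / (4 * n ^ 3) := by
          refine sum_le_sum fun i _ => sum_le_sum fun j _ => ?_
          rw [abs_mul, abs_mul, abs_rad, abs_rad, mul_one, mul_one]
          exact hent i j
      _ = lam / (4 * n) := by
          simp only [sum_const, card_univ, nsmul_eq_mul, ← hn]
          field_simp
  have hmain := hM₀ (fun ℓ x => quad (T ℓ) (d ℓ) x) C' (fun ℓ => {a ℓ, b ℓ})
    (fun ℓ x => d ℓ + ∑ i ∈ C' ℓ, ∑ j ∈ C' ℓ, T ℓ i j * (rad (x i) * rad (x j)) +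
      ∑ i ∈ (C' ℓ)ᶜ, S ℓ i i)
    (fun ℓ j x => 2 * ∑ i ∈ C' ℓ, T ℓ i j * rad (x i)) (2 * lam / 3) n (by positivity) hcard
    (by rw [hn]; exact_mod_cast hcn)
    (by
      intro ℓ x y h
      congr 2
      exact sum_congr rfl fun i hi => sum_congr rfl fun j hj => by rw [h i hi, h j hj])
    (by
      intro ℓ j x y h
      congr 1
      exact sum_congr rfl fun i hi => by rw [h i hi])
    (by
      intro ℓ x
      rw [quad_split (T ℓ) (hT ℓ) (d ℓ) (C' ℓ) x]
      have hdiag : ∑ i ∈ (C' ℓ)ᶜ, ∑ j ∈ (C' ℓ)ᶜ, T ℓ i j * (rad (x i) * rad (x j)) =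
          ∑ i ∈ (C' ℓ)ᶜ, S ℓ i i := by
        refine sum_congr rfl fun i hi => ?_
        rw [sum_eq_single_of_mem i hi]
        · simp [T, rad_mul_self]
        · intro j hj hji
          simp only [T]
          rw [if_pos ⟨by simpa using hi, by simpa using hj, hji.symm⟩, zero_mul]
      rw [hdiag]
      ring)
    (fun ℓ => subset_union_right) (fun ℓ => card_le_two) hdisj
    (by
      intro ℓ
      refine le_trans ?_ (hC ℓ)
      have h := card_union_le (C ℓ) {a ℓ, b ℓ}
      have h2 : ({a ℓ, b ℓ} : Finset ι).card ≤ 2 := card_le_two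
      exact_mod_cast (by simp only [C']; omega : (C' ℓ).card ≤ (C ℓ).card + 2))
    (by
      intro ℓ x
      obtain ⟨y, hy, hq⟩ := quad_exists_large (T ℓ) (hT ℓ) (d ℓ) (a ℓ) (b ℓ) (hab ℓ) x
      refine ⟨y, hy, le_trans ?_ hq⟩
      rw [hTC ℓ _ _ (by simp [C'])]
      have := hheavy ℓ
      linarith)
  refine le_trans (sum_le_sum fun x _ => ind_mono fun h => lt_of_le_of_lt ?_ h) hmain
  refine sum_le_sum fun ℓ _ => ind_mono fun h => ?_
  have h2 := habs ℓ x
  have h3 : |quad (T ℓ) (d ℓ) x| - |quad (S ℓ) (d ℓ) x| ≤ lam / (4 * n) := by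
    refine (abs_sub_abs_le_abs_sub _ _).trans ?_
    rwa [abs_sub_comm]
  have h4 : lam / (4 * n ^ 4) ≤ lam / (4 * n) := by
    apply div_le_div_of_nonneg_left hlam.le (by positivity)
    have : n ^ 1 ≤ n ^ 4 := pow_le_pow_right₀ hn1 (by norm_num)
    linarith
  have h5 : 2 * lam / 3 / n = lam / (4 * n) + lam / (4 * n) + lam / (6 * n) := by
    field_simp; norm_num
  have h6 : 0 < lam / (6 * n) := by positivity
  linarith

/-- Families of quadratic forms each having a large matching of large coefficients: each form is
small with small probability, and Markov's inequality applies to the number of small forms. -/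
lemma quad_family_matching : ∃ M₀ : ℕ, 1 ≤ M₀ ∧ ∀ {ι Λ : Type} [Fintype ι] [DecidableEq ι]
    [Fintype Λ] (S : Λ → ι → ι → ℝ) (d : Λ → ℝ) (τ n : ℝ) (r : ℕ) (U : Λ → Finset ι)
    (φ : Λ → ι → ι), (∀ ℓ i j, S ℓ i j = S ℓ j i) → 0 < τ → 0 < Fintype.card Λ → M₀ ≤ r →
    (r : ℝ) ≤ n → (∀ ℓ, (U ℓ).card = r) → (∀ ℓ, Set.InjOn (φ ℓ) (U ℓ)) →
    (∀ ℓ, Disjoint (U ℓ) ((U ℓ).image (φ ℓ))) →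
    (∀ ℓ, ∀ u ∈ U ℓ, τ ≤ |S ℓ u (φ ℓ u)|) →
    ∑ x, ind (∑ ℓ, ind (τ / n ≤ |quad (S ℓ) (d ℓ) x|) < (Fintype.card Λ : ℝ) / 18) ≤
      4 * (r : ℝ) ^ (-(1 / 14) : ℝ) * (Fintype.card (ι → Bool) : ℝ) := by
  obtain ⟨M₀, h1, hM₀⟩ := quad_smallBall
  refine ⟨M₀, h1, ?_⟩
  intro ι Λ _ _ _ S d τ n r U φ hS hτ hΛ hr hrn hU hφ hdisj hheavy
  set N : ℝ := (Fintype.card (ι → Bool) : ℝ) with hN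
  have hN0 : 0 < N := by rw [hN]; exact_mod_cast Fintype.card_pos
  have hΛ0 : (0 : ℝ) < Fintype.card Λ := by exact_mod_cast hΛ
  set μ : ℝ := (Fintype.card Λ : ℝ) with hμ
  have hr1 : (1 : ℝ) ≤ r := by exact_mod_cast h1.trans hr
  have hr0 : (0 : ℝ) < r := by linarith
  have hnum : (r : ℝ) ^ (-(1 / 7) : ℝ) + 1 / √(⌈(r : ℝ) / 18⌉₊ : ℝ) ≤
      (3 * (r : ℝ) ^ (-(1 / 14) : ℝ)) ^ 2 := by
    have e1 : (3 * (r : ℝ) ^ (-(1 / 14) : ℝ)) ^ 2 = 9 * (r : ℝ) ^ (-(1 / 7) : ℝ) := by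
      rw [mul_pow, ← Real.rpow_natCast, ← Real.rpow_natCast, ← Real.rpow_mul hr0.le]
      norm_num
    have e2 : 1 / √(⌈(r : ℝ) / 18⌉₊ : ℝ) ≤ 1 / √((r : ℝ) / 18) := by
      apply one_div_le_one_div_of_le (Real.sqrt_pos.2 (by positivity))
      exact Real.sqrt_le_sqrt (Nat.le_ceil _)
    have e3 : 1 / √((r : ℝ) / 18) = √18 * (r : ℝ) ^ (-(1 / 2) : ℝ) := by
      rw [Real.sqrt_div hr0.le, one_div_div, Real.rpow_neg hr0.le, ← Real.sqrt_eq_rpow,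
        div_eq_mul_inv]
    have e4 : (r : ℝ) ^ (-(1 / 2) : ℝ) ≤ (r : ℝ) ^ (-(1 / 7) : ℝ) :=
      Real.rpow_le_rpow_of_exponent_le hr1 (by norm_num)
    have e5 : √18 ≤ 5 := by rw [Real.sqrt_le_left (by norm_num)]; norm_num
    have e6 : (0 : ℝ) ≤ (r : ℝ) ^ (-(1 / 2) : ℝ) := by positivity
    have e7 : (0 : ℝ) ≤ (r : ℝ) ^ (-(1 / 7) : ℝ) := by positivity
    rw [e1]
    nlinarith
  have hone : ∀ ℓ, ∑ x, ind (|quad (S ℓ) (d ℓ) x| < τ / n) ≤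
      N * (3 * (r : ℝ) ^ (-(1 / 14) : ℝ)) := by
    intro ℓ
    have h := hM₀ (S ℓ) (d ℓ) τ n (U ℓ) (φ ℓ) (hS ℓ) hτ (by rw [hU]; exact hr)
      (by rw [hU]; exact hrn) (hφ ℓ) (hdisj ℓ) (hheavy ℓ)
    rw [hU, ← hN] at h
    refine le_of_sq_le_sq ?_ (by positivity)
    rw [mul_pow]
    exact h.trans (mul_le_mul_of_nonneg_left hnum (by positivity))
  have hpt : ∀ x, ind (∑ ℓ, ind (τ / n ≤ |quad (S ℓ) (d ℓ) x|) < μ / 18) * (17 / 18 * μ) ≤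
      ∑ ℓ, ind (|quad (S ℓ) (d ℓ) x| < τ / n) := by
    intro x
    by_cases hx : ∑ ℓ, ind (τ / n ≤ |quad (S ℓ) (d ℓ) x|) < μ / 18
    · rw [ind_of hx]
      have : ∑ ℓ, ind (|quad (S ℓ) (d ℓ) x| < τ / n) =
          μ - ∑ ℓ, ind (τ / n ≤ |quad (S ℓ) (d ℓ) x|) := by
        simp only [← not_le, ind_not, sum_sub_distrib]
        simp [hμ]
      rw [this]
      linarith
    · rw [ind_of_not hx, zero_mul]
      exact sum_nonneg fun _ _ => ind_nonneg _
  have hsum : (∑ x, ind (∑ ℓ, ind (τ / n ≤ |quad (S ℓ) (d ℓ) x|) < μ / 18)) * (17 / 18 * μ) ≤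
      μ * (N * (3 * (r : ℝ) ^ (-(1 / 14) : ℝ))) := by
    rw [sum_mul]
    refine (sum_le_sum fun x _ => hpt x).trans ?_
    rw [sum_comm]
    refine (sum_le_sum fun ℓ _ => hone ℓ).trans ?_
    rw [sum_const, card_univ, nsmul_eq_mul]
  have hfin : (∑ x, ind (∑ ℓ, ind (τ / n ≤ |quad (S ℓ) (d ℓ) x|) < μ / 18)) * (17 / 18) ≤
      N * (3 * (r : ℝ) ^ (-(1 / 14) : ℝ)) := by
    refine le_of_mul_le_mul_left ?_ hΛ0
    linarith
  have : 0 ≤ N * (r : ℝ) ^ (-(1 / 14) : ℝ) := by positivity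
  linarith

/-- A family of quadratic forms with disjoint pairs of distinguished variables `a ℓ`, `b ℓ`, whose
coefficients at these pairs are large: with high probability a positive proportion of the forms
is not small. -/
lemma quad_family : ∃ M₀ : ℕ, 1 ≤ M₀ ∧ ∀ {ι : Type} [Fintype ι] [DecidableEq ι] (m : ℕ)
    (S : Fin m → ι → ι → ℝ) (d : Fin m → ℝ) (a b : Fin m → ι) (lam : ℝ), 0 < lam →
    (∀ ℓ i j, S ℓ i j = S ℓ j i) → (∀ ℓ, a ℓ ≠ b ℓ) →
    (∀ ℓ k, ℓ ≠ k → Disjoint ({a ℓ, b ℓ} : Finset ι) {a k, b k}) →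
    (∀ ℓ, lam / 3 ≤ |S ℓ (a ℓ) (b ℓ)|) → M₀ ≤ m →
    ∑ x, ind (∑ ℓ, ind (lam / (4 * (Fintype.card ι : ℝ) ^ 4) ≤ |quad (S ℓ) (d ℓ) x|) <
        (m : ℝ) / 36) ≤
      (m : ℝ) ^ (-(1 / 24) : ℝ) * (Fintype.card (ι → Bool) : ℝ) := by
  classical
  obtain ⟨M₁, h1, hM₁⟩ := quad_family_cover
  obtain ⟨M₂, h2, hM₂⟩ := quad_family_matching
  obtain ⟨M₃, hM₃⟩ := eventually_le_rpow (max 2 M₂) (3 / 4) (by norm_num)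
  obtain ⟨M₄, hM₄⟩ := eventually_le_rpow 2 (17 / 168) (by norm_num)
  obtain ⟨M₅, hM₅⟩ := eventually_le_rpow 4 (1 / 84) (by norm_num)
  refine ⟨2 * M₁ + M₃ + M₄ + M₅ + 1, by omega, ?_⟩
  intro ι _ _ m S d a b lam hlam hS hab hdisj hheavy hm
  have hm1 : (1 : ℝ) ≤ m := by exact_mod_cast (by omega : 1 ≤ m)
  have hm0 : (0 : ℝ) < m := by linarith
  have hinj : Function.Injective a := by
    intro ℓ k h
    by_contra hne
    exact disjoint_left.1 (hdisj ℓ k hne) (mem_insert_self _ _) (by simp [h])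
  have hmn : m ≤ Fintype.card ι := by
    simpa using Fintype.card_le_of_injective a hinj
  set n : ℝ := (Fintype.card ι : ℝ) with hn
  have hmn' : (m : ℝ) ≤ n := by rw [hn]; exact_mod_cast hmn
  have hn0 : 0 < n := hm0.trans_le hmn'
  have hq := hM₃ m (by omega)
  set r : ℕ := ⌈(m : ℝ) ^ (3 / 4 : ℝ)⌉₊ with hr
  have hrlow : (m : ℝ) ^ (3 / 4 : ℝ) ≤ r := Nat.le_ceil _
  have hrup : (r : ℝ) < (m : ℝ) ^ (3 / 4 : ℝ) + 1 := Nat.ceil_lt_add_one (by positivity)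
  have hrm : r ≤ m := by
    rw [hr, Nat.ceil_le]
    calc (m : ℝ) ^ (3 / 4 : ℝ) ≤ (m : ℝ) ^ (1 : ℝ) :=
          Real.rpow_le_rpow_of_exponent_le hm1 (by norm_num)
      _ = m := Real.rpow_one _
  set τ : ℝ := lam / (4 * n ^ 3) with hτ
  have hτ0 : 0 < τ := by positivity
  have hτn : τ / n = lam / (4 * n ^ 4) := by rw [hτ]; field_simp
  set N : ℝ := (Fintype.card (ι → Bool) : ℝ) with hN
  have hN0 : 0 ≤ N := by positivity
  -- The forms with a large matching; the others have a small cover. At least half of the forms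
  -- are of one of the two kinds.
  obtain ⟨rich, hrich⟩ : ∃ rich : Fin m → Prop, ∀ ℓ, rich ℓ ↔ ∃ (U : Finset ι) (φ : ι → ι),
      U.card = r ∧ Set.InjOn φ U ∧ Disjoint U (U.image φ) ∧ ∀ u ∈ U, τ ≤ |S ℓ u (φ u)| :=
    ⟨_, fun _ => Iff.rfl⟩
  have hsub : ∀ (p : Fin m → Prop) [DecidablePred p] (x : ι → Bool), (m : ℝ) / 2 ≤ Fintype.card {ℓ // p ℓ} →
      ind (∑ ℓ, ind (lam / (4 * n ^ 4) ≤ |quad (S ℓ) (d ℓ) x|) < (m : ℝ) / 36) ≤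
      ind (∑ ℓ : {ℓ // p ℓ}, ind (lam / (4 * n ^ 4) ≤ |quad (S ℓ) (d ℓ) x|) <
        (Fintype.card {ℓ // p ℓ} : ℝ) / 18) := by
    intro p _ x hp
    refine ind_mono fun h => ?_
    have hle : ∑ ℓ : {ℓ // p ℓ}, ind (lam / (4 * n ^ 4) ≤ |quad (S ℓ) (d ℓ) x|) ≤
        ∑ ℓ, ind (lam / (4 * n ^ 4) ≤ |quad (S ℓ) (d ℓ) x|) := by
      rw [← sum_subtype (univ.filter p) (p := p) (by simp)
        (fun ℓ => ind (lam / (4 * n ^ 4) ≤ |quad (S ℓ) (d ℓ) x|))]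
      exact sum_le_sum_of_subset_of_nonneg (filter_subset _ _) fun _ _ _ => ind_nonneg _
    linarith
  have hcount : Fintype.card {ℓ // rich ℓ} + Fintype.card {ℓ // ¬ rich ℓ} = m := by
    have := Fintype.card_subtype_compl rich
    have h' := Fintype.card_subtype_le rich
    simp only [Fintype.card_fin] at this h'
    omega
  by_cases hbig : (m : ℝ) / 2 ≤ Fintype.card {ℓ // ¬ rich ℓ}
  · have hex : ∀ ℓ : {ℓ // ¬ rich ℓ}, ∃ C : Finset ι, C.card ≤ 2 * r ∧
        ∀ i, i ∉ C → ∀ j, j ∉ C → i ≠ j → |S ℓ i j| < τ := fun ℓ =>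
      (matching_or_cover (S ℓ) τ r).resolve_left
        fun h => ℓ.2 ((hrich ℓ).2 h)
    choose C hC hcov using hex
    have hcardle : Fintype.card {ℓ // ¬ rich ℓ} ≤ m := by omega
    have hbig0 : (0 : ℝ) < Fintype.card {ℓ // ¬ rich ℓ} := by linarith
    refine (sum_le_sum fun x _ => hsub (fun ℓ => ¬ rich ℓ) x hbig).trans ?_
    refine (hM₁ (fun ℓ : {ℓ // ¬ rich ℓ} => S ℓ) (fun ℓ => d ℓ) (fun ℓ => a ℓ) (fun ℓ => b ℓ) C lam
      hlam (fun ℓ => hS ℓ) (fun ℓ => hab ℓ)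
      (fun ℓ k h => hdisj ℓ k (fun h' => h (Subtype.ext h'))) (fun ℓ => hheavy ℓ) ?_
      (hcardle.trans hmn) ?_ hcov).trans ?_
    · have : (M₁ : ℝ) ≤ Fintype.card {ℓ // ¬ rich ℓ} := by
        have : (2 * M₁ : ℝ) ≤ m := by exact_mod_cast (by omega : 2 * M₁ ≤ m)
        linarith
      exact_mod_cast this
    · intro ℓ
      have c1 : ((C ℓ).card : ℝ) ≤ 2 * r := by exact_mod_cast hC ℓ
      have c2 : ((m : ℝ) / 2) ^ (3 / 4 : ℝ) ≤
          (Fintype.card {ℓ // ¬ rich ℓ} : ℝ) ^ (3 / 4 : ℝ) := by gcongr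
      have c3 : (m : ℝ) ^ (3 / 4 : ℝ) ≤ 2 * ((m : ℝ) / 2) ^ (3 / 4 : ℝ) := by
        rw [Real.div_rpow hm0.le (by norm_num)]
        have : (2 : ℝ) ^ (3 / 4 : ℝ) ≤ 2 := by
          calc (2 : ℝ) ^ (3 / 4 : ℝ) ≤ (2 : ℝ) ^ (1 : ℝ) :=
                Real.rpow_le_rpow_of_exponent_le (by norm_num) (by norm_num)
            _ = 2 := Real.rpow_one _
        rw [← mul_div_assoc, le_div_iff₀ (by positivity), mul_comm]
        gcongr
      have c4 : (2 : ℝ) ≤ (m : ℝ) ^ (3 / 4 : ℝ) := (le_max_left _ _).trans hq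
      linarith
    · gcongr
      have c2 : (Fintype.card {ℓ // ¬ rich ℓ} : ℝ) ^ (-(1 / 7) : ℝ) ≤
          ((m : ℝ) / 2) ^ (-(1 / 7) : ℝ) :=
        Real.rpow_le_rpow_of_nonpos (by positivity) hbig (by norm_num)
      have c3 : ((m : ℝ) / 2) ^ (-(1 / 7) : ℝ) ≤ 2 * (m : ℝ) ^ (-(1 / 7) : ℝ) := by
        rw [Real.div_rpow hm0.le (by norm_num), div_le_iff₀ (by positivity)]
        have : (1 / 2 : ℝ) ≤ (2 : ℝ) ^ (-(1 / 7) : ℝ) := by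
          calc (1 / 2 : ℝ) = (2 : ℝ) ^ (-1 : ℝ) := by rw [Real.rpow_neg_one]; norm_num
            _ ≤ _ := Real.rpow_le_rpow_of_exponent_le (by norm_num) (by norm_num)
        have h0 : 0 ≤ (m : ℝ) ^ (-(1 / 7) : ℝ) := by positivity
        nlinarith
      have c4 := hM₄ m (by omega)
      calc _ ≤ 2 * (m : ℝ) ^ (-(1 / 7) : ℝ) := c2.trans c3
        _ ≤ (m : ℝ) ^ (17 / 168 : ℝ) * (m : ℝ) ^ (-(1 / 7) : ℝ) := by gcongr
        _ = _ := by rw [← Real.rpow_add hm0]; norm_num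
  · have hbig2 : (m : ℝ) / 2 ≤ Fintype.card {ℓ // rich ℓ} := by
      have : (Fintype.card {ℓ // rich ℓ} : ℝ) + Fintype.card {ℓ // ¬ rich ℓ} = m := by
        exact_mod_cast hcount
      linarith
    have hex : ∀ ℓ : {ℓ // rich ℓ}, ∃ (U : Finset ι) (φ : ι → ι), U.card = r ∧
        Set.InjOn φ U ∧ Disjoint U (U.image φ) ∧ ∀ u ∈ U, τ ≤ |S ℓ u (φ u)| :=
      fun ℓ => (hrich ℓ).1 ℓ.2
    choose U φ hU hφ hd hh using hex
    refine (sum_le_sum fun x _ => hsub rich x hbig2).trans ?_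
    rw [← hτn]
    refine (hM₂ (fun ℓ : {ℓ // rich ℓ} => S ℓ) (fun ℓ => d ℓ) τ n r U φ (fun ℓ => hS ℓ) hτ0
      ?_ ?_ ?_ hU hφ hd hh).trans ?_
    · have : (0 : ℝ) < Fintype.card {ℓ // rich ℓ} := by linarith
      exact_mod_cast this
    · have : (M₂ : ℝ) ≤ r := ((le_max_right _ _).trans hq).trans hrlow
      exact_mod_cast this
    · exact le_trans (by exact_mod_cast hrm) hmn'
    · gcongr
      have c1 : (r : ℝ) ^ (-(1 / 14) : ℝ) ≤ ((m : ℝ) ^ (3 / 4 : ℝ)) ^ (-(1 / 14) : ℝ) :=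
        Real.rpow_le_rpow_of_nonpos (by positivity) hrlow (by norm_num)
      have c2 : ((m : ℝ) ^ (3 / 4 : ℝ)) ^ (-(1 / 14) : ℝ) = (m : ℝ) ^ (-(3 / 56) : ℝ) := by
        rw [← Real.rpow_mul hm0.le]; norm_num
      have c4 := hM₅ m (by omega)
      calc _ ≤ 4 * (m : ℝ) ^ (-(3 / 56) : ℝ) := by rw [← c2]; gcongr
        _ ≤ (m : ℝ) ^ (1 / 84 : ℝ) * (m : ℝ) ^ (-(3 / 56) : ℝ) := by gcongr
        _ = _ := by rw [← Real.rpow_add hm0]; norm_num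

/-! ### Expansion of permanents -/

lemma sum_equiv_congr {α α' β β' : Type} [Fintype α] [DecidableEq α] [Fintype α']
    [DecidableEq α'] [Fintype β] [DecidableEq β] [Fintype β'] [DecidableEq β']
    (e₁ : α ≃ α') (e₂ : β ≃ β') (F : α' → β' → ℝ) :
    ∑ σ : α ≃ β, ∏ i, F (e₁ i) (e₂ (σ i)) = ∑ σ : α' ≃ β', ∏ i, F i (σ i) := by
  rw [← Equiv.sum_comp (Equiv.equivCongr e₁ e₂)]
  refine sum_congr rfl fun σ _ => ?_
  rw [← Equiv.prod_comp e₁]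
  simp

lemma sum_equiv_option {α β : Type} [Fintype α] [DecidableEq α] [Fintype β] [DecidableEq β]
    (F : Option α → β → ℝ) :
    ∑ σ : Option α ≃ β, ∏ i, F i (σ i) =
      ∑ y, F none y * ∑ τ : α ≃ {z // z ≠ y}, ∏ i, F (some i) (τ i) := by
  rw [← Equiv.sum_comp (Equiv.sigmaFiberEquiv (fun e : Option α ≃ β => e none)),
    Fintype.sum_sigma]
  refine sum_congr rfl fun y _ => ?_
  rw [mul_sum, ← Equiv.sum_comp (Equiv.optionSubtype (α := α) y)]
  refine sum_congr rfl fun e _ => ?_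
  rw [Fintype.prod_option]
  obtain ⟨e, he⟩ := e
  simp [Equiv.sigmaFiberEquiv, he]

/-- Laplace expansion of the permanent along the row `a`. -/
lemma permOn_row {m n : ℕ} (M : Matrix (Fin m) (Fin n) ℝ) (A : Finset (Fin m))
    (B : Finset (Fin n)) (a : Fin m) (ha : a ∈ A) :
    permOn M A B = ∑ j ∈ B, M a j * permOn M (A.erase a) (B.erase j) := by
  let e₁ : Option {x // x ∈ A.erase a} ≃ {x // x ∈ A} :=
    { toFun := fun o => o.elim ⟨a, ha⟩ fun x => ⟨x.1, mem_of_mem_erase x.2⟩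
      invFun := fun x => if h : x.1 = a then none else some ⟨x.1, mem_erase.2 ⟨h, x.2⟩⟩
      left_inv := by
        rintro (_ | ⟨x, hx⟩)
        · simp
        · simp [(mem_erase.1 hx).1]
      right_inv := by
        rintro ⟨x, hx⟩
        by_cases h : x = a
        · subst h; simp
        · simp [h] }
  have e₂ : ∀ y : {y // y ∈ B}, ∃ e : {z : {y // y ∈ B} // z ≠ y} ≃ {x // x ∈ B.erase y.1},
      ∀ z, (e z).1 = z.1.1 := fun y =>
    ⟨{  toFun := fun z => ⟨z.1.1, mem_erase.2 ⟨fun h => z.2 (Subtype.ext h), z.1.2⟩⟩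
        invFun := fun x => ⟨⟨x.1, mem_of_mem_erase x.2⟩,
          fun h => (mem_erase.1 x.2).1 (congrArg Subtype.val h)⟩
        left_inv := fun z => rfl
        right_inv := fun z => rfl }, fun z => rfl⟩
  have h1 := sum_equiv_congr e₁ (Equiv.refl {y // y ∈ B}) (fun i j => M i.1 j.1)
  rw [permOn, ← h1]
  rw [sum_equiv_option (fun i (j : {y // y ∈ B}) => M (e₁ i).1 (Equiv.refl {y // y ∈ B} j).1)]
  rw [← sum_coe_sort B (fun j => M a j * permOn M (A.erase a) (B.erase j))]
  refine sum_congr rfl fun y _ => ?_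
  obtain ⟨e, he⟩ := e₂ y
  have h2 := sum_equiv_congr (Equiv.refl {x // x ∈ A.erase a}) e (fun i j => M i.1 j.1)
  rw [permOn, ← h2]
  simp only [he]
  rfl

lemma permOn_transpose {m n : ℕ} (M : Matrix (Fin m) (Fin n) ℝ) (A : Finset (Fin m))
    (B : Finset (Fin n)) : permOn M.transpose B A = permOn M A B := by
  rw [permOn, permOn, ← Equiv.sum_comp (Equiv.symmEquiv {x // x ∈ A} {y // y ∈ B})]
  refine sum_congr rfl fun σ _ => ?_
  rw [← Equiv.prod_comp σ]
  simp [Matrix.transpose]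

lemma permOn_symm {n : ℕ} (M : Matrix (Fin n) (Fin n) ℝ) (hM : M.IsSymm)
    (A B : Finset (Fin n)) : permOn M A B = permOn M B A := by
  rw [← permOn_transpose M B A, hM.eq]

/-- Laplace expansion of the permanent along the column `b`. -/
lemma permOn_col {m n : ℕ} (M : Matrix (Fin m) (Fin n) ℝ) (A : Finset (Fin m))
    (B : Finset (Fin n)) (b : Fin n) (hb : b ∈ B) :
    permOn M A B = ∑ i ∈ A, M i b * permOn M (A.erase i) (B.erase b) := by
  rw [← permOn_transpose, permOn_row _ _ _ b hb]
  simp only [permOn_transpose, Matrix.transpose_apply]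

lemma exists_map_equiv {α β : Type} (A : Finset α) (f : α ↪ β) :
    ∃ e : {x // x ∈ A} ≃ {y // y ∈ A.map f}, ∀ x, (e x).1 = f x.1 := by
  refine ⟨Equiv.ofBijective (fun x => ⟨f x.1, mem_map_of_mem f x.2⟩) ⟨fun x y h => ?_, ?_⟩,
    fun x => rfl⟩
  · exact Subtype.ext (f.injective (congrArg Subtype.val h))
  · rintro ⟨y, hy⟩
    obtain ⟨x, hx, rfl⟩ := mem_map.1 hy
    exact ⟨⟨x, hx⟩, rfl⟩

lemma permOn_map {m n m' n' : ℕ} (M : Matrix (Fin m) (Fin n) ℝ) (M' : Matrix (Fin m') (Fin n') ℝ)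
    (f : Fin m ↪ Fin m') (g : Fin n ↪ Fin n') (h : ∀ i j, M' (f i) (g j) = M i j)
    (A : Finset (Fin m)) (B : Finset (Fin n)) :
    permOn M' (A.map f) (B.map g) = permOn M A B := by
  obtain ⟨e₁, he₁⟩ := exists_map_equiv A f
  obtain ⟨e₂, he₂⟩ := exists_map_equiv B g
  rw [permOn, permOn, ← sum_equiv_congr e₁ e₂ (fun i j => M' i.1 j.1)]
  refine sum_congr rfl fun σ _ => prod_congr rfl fun i _ => ?_
  rw [he₁, he₂, h]

/-- The subset of `{0, …, n}` obtained from a subset of `{0, …, n - 1}` by adding the new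
element. -/
def addLast {n : ℕ} (A : Finset (Fin n)) : Finset (Fin (n + 1)) :=
  insert (Fin.last n) (A.map Fin.castSuccEmb)

lemma last_notMem_map {n : ℕ} (A : Finset (Fin n)) : Fin.last n ∉ A.map Fin.castSuccEmb := by
  simp only [mem_map, not_exists, not_and]
  intro x _ h
  exact (Fin.castSucc_lt_last x).ne h

lemma last_mem_addLast {n : ℕ} (A : Finset (Fin n)) : Fin.last n ∈ addLast A :=
  mem_insert_self _ _

lemma sum_addLast {n : ℕ} (A : Finset (Fin n)) (F : Fin (n + 1) → ℝ) :
    ∑ i ∈ addLast A, F i = F (Fin.last n) + ∑ i ∈ A, F i.castSucc := by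
  rw [addLast, sum_insert (last_notMem_map A), sum_map]
  rfl

lemma card_addLast {n : ℕ} (A : Finset (Fin n)) : (addLast A).card = A.card + 1 := by
  rw [addLast, card_insert_of_notMem (last_notMem_map A), card_map]

lemma compl_addLast {n : ℕ} (A : Finset (Fin n)) : (addLast A)ᶜ = Aᶜ.map Fin.castSuccEmb := by
  ext i
  refine Fin.lastCases ?_ (fun j => ?_) i
  · simp [addLast]
  · simp [addLast, (Fin.castSucc_lt_last j).ne]

lemma addLast_erase {n : ℕ} (B : Finset (Fin n)) (j : Fin n) :
    (addLast B).erase j.castSucc = addLast (B.erase j) := by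
  ext i
  refine Fin.lastCases ?_ (fun k => ?_) i
  · simp [addLast, (Fin.castSucc_lt_last j).ne']
  · simp [addLast, (Fin.castSucc_lt_last k).ne]

lemma addLast_erase_last {n : ℕ} (B : Finset (Fin n)) :
    (addLast B).erase (Fin.last n) = B.map Fin.castSuccEmb := by
  rw [addLast, erase_insert (last_notMem_map B)]

lemma extSym_castSucc {n : ℕ} (M : Matrix (Fin n) (Fin n) ℝ) (ω : Fin (n + 1) → Fin (n + 1) → Bool)
    (i j : Fin n) : extSym (n + 1) M ω i.castSucc j.castSucc = M i j := by
  simp [extSym]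

lemma extSym_castSucc_last {n : ℕ} (M : Matrix (Fin n) (Fin n) ℝ)
    (ω : Fin (n + 1) → Fin (n + 1) → Bool) (i : Fin n) :
    extSym (n + 1) M ω i.castSucc (Fin.last n) = rad (ω i.castSucc (Fin.last n)) := by
  simp [extSym, Fin.le_last]

lemma extSym_last_castSucc {n : ℕ} (M : Matrix (Fin n) (Fin n) ℝ)
    (ω : Fin (n + 1) → Fin (n + 1) → Bool) (i : Fin n) :
    extSym (n + 1) M ω (Fin.last n) i.castSucc = rad (ω i.castSucc (Fin.last n)) := by
  have : ¬ Fin.last n ≤ i.castSucc := not_le.2 (Fin.castSucc_lt_last i)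
  simp [extSym, this]

lemma extSym_last_last {n : ℕ} (M : Matrix (Fin n) (Fin n) ℝ)
    (ω : Fin (n + 1) → Fin (n + 1) → Bool) :
    extSym (n + 1) M ω (Fin.last n) (Fin.last n) = rad (ω (Fin.last n) (Fin.last n)) := by
  simp [extSym]

/-- The coefficient of `s_i * s_j` (up to symmetrisation) in the permanent of the extended
submatrix with row set `A` and column set `B`, both enlarged by the new index. -/
noncomputable def coef {n : ℕ} (M : Matrix (Fin n) (Fin n) ℝ) (A B : Finset (Fin n))
    (i j : Fin n) : ℝ :=
  if i ∈ A ∧ j ∈ B then permOn M (A.erase i) (B.erase j) else 0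

/-- The permanent of an extended submatrix is a quadratic form in the new off-diagonal entries. -/
lemma permOn_extSym {n : ℕ} (M : Matrix (Fin n) (Fin n) ℝ) (A B : Finset (Fin n))
    (ω : Fin (n + 1) → Fin (n + 1) → Bool) :
    permOn (extSym (n + 1) M ω) (addLast A) (addLast B) =
      quad (fun i j => (coef M A B i j + coef M A B j i) / 2)
        (rad (ω (Fin.last n) (Fin.last n)) * permOn M A B)
        (fun i => ω i.castSucc (Fin.last n)) := by
  have hmap : ∀ A B : Finset (Fin n), permOn (extSym (n + 1) M ω) (A.map Fin.castSuccEmb)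
      (B.map Fin.castSuccEmb) = permOn M A B := fun A B =>
    permOn_map M _ _ _ (fun i j => by simpa using extSym_castSucc M ω i j) A B
  rw [permOn_row _ _ _ (Fin.last n) (last_mem_addLast A), addLast_erase_last, sum_addLast,
    addLast_erase_last, hmap, extSym_last_last, quad]
  congr 1
  have hcol : ∀ j, permOn (extSym (n + 1) M ω) (A.map Fin.castSuccEmb) (addLast (B.erase j)) =
      ∑ i ∈ A, rad (ω i.castSucc (Fin.last n)) * permOn M (A.erase i) (B.erase j) := by
    intro j
    rw [permOn_col _ _ _ (Fin.last n) (last_mem_addLast _), addLast_erase_last, sum_map]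
    refine sum_congr rfl fun i _ => ?_
    rw [← map_erase, hmap]
    congr 1
    exact extSym_castSucc_last M ω i
  set s : Fin n → ℝ := fun i => rad (ω i.castSucc (Fin.last n)) with hs
  have hK : ∑ j ∈ B, extSym (n + 1) M ω (Fin.last n) j.castSucc *
      permOn (extSym (n + 1) M ω) (A.map Fin.castSuccEmb)
        ((addLast B).erase j.castSucc) = ∑ i, ∑ j, coef M A B i j * (s i * s j) := by
    rw [sum_comm]
    calc _ = ∑ j ∈ B, ∑ i ∈ A, permOn M (A.erase i) (B.erase j) * (s i * s j) := by
          refine sum_congr rfl fun j _ => ?_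
          rw [addLast_erase, hcol, extSym_last_castSucc, mul_sum]
          exact sum_congr rfl fun i _ => by simp only [hs]; ring
      _ = ∑ j ∈ B, ∑ i ∈ A, coef M A B i j * (s i * s j) := by
          refine sum_congr rfl fun j hj => sum_congr rfl fun i hi => ?_
          rw [coef, if_pos ⟨hi, hj⟩]
      _ = ∑ j ∈ B, ∑ i, coef M A B i j * (s i * s j) := by
          refine sum_congr rfl fun j _ => sum_subset (subset_univ _) fun i _ hi => ?_
          rw [coef, if_neg (by tauto), zero_mul]
      _ = _ := by
          refine sum_subset (subset_univ _) fun j _ hj => sum_eq_zero fun i _ => ?_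
          rw [coef, if_neg (by tauto), zero_mul]
  have hK' : ∑ i, ∑ j, coef M A B j i * (s i * s j) = ∑ i, ∑ j, coef M A B i j * (s i * s j) := by
    rw [sum_comm]
    exact sum_congr rfl fun i _ => sum_congr rfl fun j _ => by ring
  rw [hK]
  have : ∀ i j, (coef M A B i j + coef M A B j i) / 2 * (s i * s j) =
      (coef M A B i j * (s i * s j)) / 2 + (coef M A B j i * (s i * s j)) / 2 :=
    fun i j => by ring
  change _ = ∑ i, ∑ j, (coef M A B i j + coef M A B j i) / 2 * (s i * s j)
  simp only [this, sum_add_distrib, ← sum_div, hK']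
  ring

/-- A heavy submatrix can be enlarged by one row and one column so that some off-diagonal
coefficient of the resulting quadratic form is large. The removed indices stay inside
`Aᶜ ∪ Bᶜ`, and the two variables of the large coefficient lie there too. With at least two missing
columns `b`, `b'`, three enlargements have coefficients proportional to `f₀ + f₁`, `f₀ + f₂`,
`f₁ + f₂`, where `f₀ = per M[A,B]`; these cannot all be small. -/
lemma exists_enlarge {n L : ℕ} (hL : 1 ≤ L) (hLn : L < n) (M : Matrix (Fin n) (Fin n) ℝ)
    (hM : M.IsSymm) (A B : Finset (Fin n)) (hA : A.card = n - L) (hB : B.card = n - L)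
    (hAB : Disjoint Aᶜ Bᶜ) (lam : ℝ) (hlam : 0 < lam) (hheavy : lam ≤ |permOn M A B|) :
    ∃ (A' B' : Finset (Fin n)) (a b : Fin n), A'.card = n - L + 1 ∧ B'.card = n - L + 1 ∧
      Disjoint A'ᶜ B'ᶜ ∧ A'ᶜ ⊆ Aᶜ ∪ Bᶜ ∧ B'ᶜ ⊆ Aᶜ ∪ Bᶜ ∧ a ≠ b ∧ a ∈ Aᶜ ∪ Bᶜ ∧ b ∈ Aᶜ ∪ Bᶜ ∧
      lam / 3 ≤ |(coef M A' B' a b + coef M A' B' b a) / 2| := by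
  have hAc : Aᶜ.card = L := by rw [card_compl, hA, Fintype.card_fin]; omega
  have hBc : Bᶜ.card = L := by rw [card_compl, hB, Fintype.card_fin]; omega
  have hdis : ∀ x, x ∉ A → x ∈ B := fun x hx => by
    by_contra h
    exact disjoint_left.1 hAB (mem_compl.2 hx) (mem_compl.2 h)
  by_cases hL1 : L = 1
  · subst hL1
    obtain ⟨a, ha⟩ := card_eq_one.1 hAc
    obtain ⟨b, hb⟩ := card_eq_one.1 hBc
    have ha' : a ∉ A := by rw [← mem_compl, ha]; simp
    have hb' : b ∉ B := by rw [← mem_compl, hb]; simp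
    have hab : a ≠ b := by
      rintro rfl
      exact hb' (hdis a ha')
    have eA : univ.erase a = A := by
      rw [← compl_compl A, ha]; ext; simp
    have eB : univ.erase b = B := by
      rw [← compl_compl B, hb]; ext; simp
    refine ⟨univ, univ, a, b, ?_, ?_, by simp, by simp, by simp, hab, by simp [ha'],
      by simp [hb'], ?_⟩
    · rw [card_univ, Fintype.card_fin]; omega
    · rw [card_univ, Fintype.card_fin]; omega
    · have : (coef M univ univ a b + coef M univ univ b a) / 2 = permOn M A B := by
        simp only [coef, mem_univ, and_self, if_true, eA, eB]
        rw [permOn_symm M hM B A]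
        ring
      rw [this]
      linarith
  · obtain ⟨a, ha⟩ : Aᶜ.Nonempty := card_pos.1 (by omega)
    obtain ⟨b, hb, c, hc, hbc⟩ := one_lt_card.1 (by omega : 1 < Bᶜ.card)
    rw [mem_compl] at ha hb hc
    have haB := hdis a ha
    have hbA : b ∈ A := by by_contra h; exact hb (hdis b h)
    have hcA : c ∈ A := by by_contra h; exact hc (hdis c h)
    have hab : a ≠ b := by rintro rfl; exact ha hbA
    have hac : a ≠ c := by rintro rfl; exact ha hcA
    set f₀ := permOn M A B with hf₀
    set f₁ := permOn M ((insert a A).erase b) ((insert b B).erase a) with hf₁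
    set f₂ := permOn M ((insert a A).erase c) ((insert c B).erase a) with hf₂
    have hcases : lam / 3 ≤ |(f₀ + f₁) / 2| ∨ lam / 3 ≤ |(f₀ + f₂) / 2| ∨
        lam / 3 ≤ |(f₁ + f₂) / 2| := by
      by_contra hcon
      push Not at hcon
      obtain ⟨h1, h2, h3⟩ := hcon
      rw [abs_lt] at h1 h2 h3
      rcases abs_cases f₀ with ⟨h, _⟩ | ⟨h, _⟩ <;> rw [h] at hheavy <;> linarith
    have hcA' : (insert a A).card = n - L + 1 := by rw [card_insert_of_notMem ha, hA]
    have hone : ∀ b, b ∉ B → a ≠ b → (insert b B).card = n - L + 1 ∧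
        Disjoint (insert a A)ᶜ (insert b B)ᶜ ∧ (insert a A)ᶜ ⊆ Aᶜ ∪ Bᶜ ∧
        (insert b B)ᶜ ⊆ Aᶜ ∪ Bᶜ ∧
        coef M (insert a A) (insert b B) a b + coef M (insert a A) (insert b B) b a =
          f₀ + permOn M ((insert a A).erase b) ((insert b B).erase a) := by
      intro b hb hab
      have hbA : b ∈ A := by by_contra h; exact hb (hdis b h)
      refine ⟨by rw [card_insert_of_notMem hb, hB], ?_, ?_, ?_, ?_⟩
      · refine disjoint_of_subset_left ?_ (disjoint_of_subset_right ?_ hAB)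
        · exact compl_subset_compl.2 (subset_insert _ _)
        · exact compl_subset_compl.2 (subset_insert _ _)
      · exact (compl_subset_compl.2 (subset_insert _ _)).trans subset_union_left
      · exact (compl_subset_compl.2 (subset_insert _ _)).trans subset_union_right
      · rw [coef, coef, if_pos (by simp), if_pos (by simp [hbA, haB]), erase_insert ha,
          erase_insert hb]
    rcases hcases with h | h | h
    · obtain ⟨g1, g2, g3, g4, g5⟩ := hone b hb hab
      exact ⟨insert a A, insert b B, a, b, hcA', g1, g2, g3, g4, hab, by simp [ha], by simp [hb],
        by rw [g5]; exact h⟩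
    · obtain ⟨g1, g2, g3, g4, g5⟩ := hone c hc hac
      exact ⟨insert a A, insert c B, a, c, hcA', g1, g2, g3, g4, hac, by simp [ha], by simp [hc],
        by rw [g5]; exact h⟩
    · have e1 : ((insert b (insert c B)).erase a).erase c = (insert b B).erase a := by
        rw [erase_right_comm, erase_insert_of_ne hbc, erase_insert hc]
      have e2 : ((insert b (insert c B)).erase a).erase b = (insert c B).erase a := by
        rw [erase_right_comm, erase_insert (by simp [hbc, hb])]
      refine ⟨insert a A, (insert b (insert c B)).erase a, b, c, hcA', ?_, ?_, ?_, ?_, hbc,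
        by simp [hb], by simp [hc], ?_⟩
      · rw [card_erase_of_mem (by simp [haB]), card_insert_of_notMem (by simp [hbc, hb]),
          card_insert_of_notMem hc, hB]
        omega
      · rw [disjoint_left]
        intro x hx hx'
        simp only [mem_compl, mem_insert, mem_erase, not_or, not_and, ne_eq] at hx hx'
        exact (hx' hx.1).2.2 (hdis x hx.2)
      · exact (compl_subset_compl.2 (subset_insert _ _)).trans subset_union_left
      · intro x hx
        simp only [mem_compl, mem_insert, mem_erase, not_and, ne_eq, not_or, mem_union] at hx ⊢
        by_cases hxa : x = a
        · left; rwa [hxa]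
        · right; exact (hx hxa).2.2
      · rw [coef, coef, if_pos (by simp [hbA, hac.symm]), if_pos (by simp [hcA, hab.symm]), e1, e2]
        exact h

/-! ### Conditioning on the new diagonal entry -/

/-- The Boolean data obtained from `ω` by replacing the off-diagonal entries of the last column
by `x`. -/
def setCol {n : ℕ} (ω : Fin (n + 1) → Fin (n + 1) → Bool) (x : Fin n → Bool) :
    Fin (n + 1) → Fin (n + 1) → Bool :=
  fun i j => if j = Fin.last n then Fin.lastCases (motive := fun _ => Bool)
    (ω (Fin.last n) (Fin.last n)) x i else ω i j

lemma setCol_castSucc {n : ℕ} (ω : Fin (n + 1) → Fin (n + 1) → Bool) (x : Fin n → Bool)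
    (i : Fin n) : setCol ω x i.castSucc (Fin.last n) = x i := by
  simp [setCol]

lemma setCol_last {n : ℕ} (ω : Fin (n + 1) → Fin (n + 1) → Bool) (x : Fin n → Bool) :
    setCol ω x (Fin.last n) (Fin.last n) = ω (Fin.last n) (Fin.last n) := by
  simp [setCol]

/-- Resampling the off-diagonal entries of the last column leaves the data uniform. -/
lemma sum_setCol {n : ℕ} (F : (Fin (n + 1) → Fin (n + 1) → Bool) → ℝ) :
    ∑ ω, ∑ x, F (setCol ω x) = (Fintype.card (Fin n → Bool) : ℝ) * ∑ ω, F ω := by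
  have hinv : Function.Involutive
      (fun p : (Fin (n + 1) → Fin (n + 1) → Bool) × (Fin n → Bool) =>
        (setCol p.1 p.2, fun i : Fin n => p.1 i.castSucc (Fin.last n))) := by
    rintro ⟨ω, x⟩
    refine Prod.ext ?_ ?_
    · funext i j
      by_cases hj : j = Fin.last n
      · subst hj
        refine Fin.lastCases ?_ (fun k => ?_) i
        · simp [setCol]
        · simp [setCol]
      · simp [setCol, hj]
    · funext i
      simp [setCol]
  have h := Equiv.sum_comp hinv.toPerm
    (fun p : (Fin (n + 1) → Fin (n + 1) → Bool) × (Fin n → Bool) => F p.1)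
  rw [← Fintype.sum_prod_type' (f := fun ω x => F (setCol ω x))]
  refine h.trans ?_
  rw [Fintype.sum_prod_type]
  simp [mul_sum]

/-- Survival of heavy submatrices: for sufficiently large `m`, if
`A_1, …, A_m, B_1, …, B_m` are complement-disjoint subsets of `{1,…,n}` of size `n - L`
(where `1 ≤ L < n`), and `M` is a fixed symmetric `±1` matrix all of whose submatrices
`M[A_ℓ, B_ℓ]` are `λ`-heavy, then after adding a random symmetric row and column (with
i.i.d. Rademacher entries), with probability at least `1 - m^(-1/24)` there are
complement-disjoint subsets `A'_1, …, A'_{m'}, B'_1, …, B'_{m'}` of `{1,…,n+1}` of size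
`n - L + 2`, with `m' = ⌈m/36⌉`, all of whose submatrices are `λ/(4n^4)`-heavy. -/
theorem endgame_step :
    ∃ m₀ : ℕ, ∀ m : ℕ, m₀ ≤ m → ∀ lam : ℝ, 0 < lam → ∀ n L : ℕ, 1 ≤ L → L < n →
      ∀ A B : Fin m → Finset (Fin n), cdisj (Sum.elim A B) →
        (∀ ℓ, (A ℓ).card = n - L) → (∀ ℓ, (B ℓ).card = n - L) →
        ∀ M : Matrix (Fin n) (Fin n) ℝ, M.IsSymm →
          (∀ i j, M i j = 1 ∨ M i j = -1) →
          (∀ ℓ, lam ≤ |permOn M (A ℓ) (B ℓ)|) →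
          1 - (m : ℝ) ^ (-(1 / 24 : ℝ)) ≤
            probExt (n + 1) M fun M' =>
              ∃ A' B' : Fin ⌈(m : ℝ) / 36⌉₊ → Finset (Fin (n + 1)),
                cdisj (Sum.elim A' B') ∧
                (∀ ℓ, (A' ℓ).card = n - L + 2) ∧ (∀ ℓ, (B' ℓ).card = n - L + 2) ∧
                ∀ ℓ, lam / (4 * (n : ℝ) ^ 4) ≤ |permOn M' (A' ℓ) (B' ℓ)| := by

  classical
  obtain ⟨m₀, h1, hm₀⟩ := quad_family
  refine ⟨m₀, ?_⟩
  intro m hm lam hlam n L hL hLn A B hAB hA hB M hM _ hheavy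
  have hAA : ∀ ℓ k, ℓ ≠ k → Disjoint (A ℓ)ᶜ (A k)ᶜ := fun ℓ k h =>
    hAB (Sum.inl ℓ) (Sum.inl k) (fun h' => h (Sum.inl.inj h'))
  have hBB : ∀ ℓ k, ℓ ≠ k → Disjoint (B ℓ)ᶜ (B k)ᶜ := fun ℓ k h =>
    hAB (Sum.inr ℓ) (Sum.inr k) (fun h' => h (Sum.inr.inj h'))
  have hABd : ∀ ℓ k, Disjoint (A ℓ)ᶜ (B k)ᶜ := fun ℓ k =>
    hAB (Sum.inl ℓ) (Sum.inr k) (by simp)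
  have hE : ∀ ℓ k, ℓ ≠ k → Disjoint ((A ℓ)ᶜ ∪ (B ℓ)ᶜ) ((A k)ᶜ ∪ (B k)ᶜ) := by
    intro ℓ k h
    rw [disjoint_union_left, disjoint_union_right, disjoint_union_right]
    exact ⟨⟨hAA ℓ k h, hABd ℓ k⟩, (hABd k ℓ).symm, hBB ℓ k h⟩
  choose A' B' a b hA' hB' hd hsA hsB hab haE hbE hbig using fun ℓ =>
    exists_enlarge hL hLn M hM (A ℓ) (B ℓ) (hA ℓ) (hB ℓ) (hABd ℓ ℓ) lam hlam (hheavy ℓ)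
  set thr : ℝ := lam / (4 * (n : ℝ) ^ 4) with hthr
  let P : Fin m → (Fin (n + 1) → Fin (n + 1) → Bool) → ℝ := fun ℓ ω =>
    permOn (extSym (n + 1) M ω) (addLast (A' ℓ)) (addLast (B' ℓ))
  let bad : (Fin (n + 1) → Fin (n + 1) → Bool) → Prop := fun ω =>
    ∑ ℓ, ind (thr ≤ |P ℓ ω|) < (m : ℝ) / 36
  have hbad : ∑ ω, ind (bad ω) ≤ (m : ℝ) ^ (-(1 / 24) : ℝ) * 2 ^ ((n + 1) * (n + 1)) := by
    have hω : ∀ ω, ∑ x, ind (bad (setCol ω x)) ≤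
        (m : ℝ) ^ (-(1 / 24) : ℝ) * (Fintype.card (Fin n → Bool) : ℝ) := by
      intro ω
      have h := hm₀ m (fun ℓ i j => (coef M (A' ℓ) (B' ℓ) i j + coef M (A' ℓ) (B' ℓ) j i) / 2)
        (fun ℓ => rad (ω (Fin.last n) (Fin.last n)) * permOn M (A' ℓ) (B' ℓ)) a b lam hlam
        (fun ℓ i j => by rw [add_comm]) hab
        (fun ℓ k hne => disjoint_of_subset_left
          (insert_subset (haE ℓ) (singleton_subset_iff.2 (hbE ℓ)))
          (disjoint_of_subset_right (insert_subset (haE k) (singleton_subset_iff.2 (hbE k)))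
            (hE ℓ k hne))) hbig hm
      refine le_of_eq_of_le (sum_congr rfl fun x _ => ?_) h
      simp only [bad, P, permOn_extSym, setCol_castSucc, setCol_last, Fintype.card_fin, hthr]
    have h2 := sum_setCol (n := n) (fun ω => ind (bad ω))
    have h3 : (Fintype.card (Fin n → Bool) : ℝ) * ∑ ω, ind (bad ω) ≤
        (Fintype.card (Fin n → Bool) : ℝ) *
          ((m : ℝ) ^ (-(1 / 24) : ℝ) * 2 ^ ((n + 1) * (n + 1))) := by
      rw [← h2]
      refine (sum_le_sum fun ω _ => hω ω).trans (le_of_eq ?_)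
      rw [sum_const, card_univ, nsmul_eq_mul]
      have : Fintype.card (Fin (n + 1) → Fin (n + 1) → Bool) = 2 ^ ((n + 1) * (n + 1)) := by
        simp [pow_mul]
      rw [this]
      push_cast
      ring
    exact le_of_mul_le_mul_left h3 (by exact_mod_cast Fintype.card_pos)
  have hgood : ∀ ω, ¬ bad ω → ∃ A₁ B₁ : Fin ⌈(m : ℝ) / 36⌉₊ → Finset (Fin (n + 1)),
      cdisj (Sum.elim A₁ B₁) ∧
      (∀ ℓ, (A₁ ℓ).card = n - L + 2) ∧ (∀ ℓ, (B₁ ℓ).card = n - L + 2) ∧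
      ∀ ℓ, thr ≤ |permOn (extSym (n + 1) M ω) (A₁ ℓ) (B₁ ℓ)| := by
    intro ω hω
    simp only [bad, not_lt] at hω
    rw [sum_ind] at hω
    have hcard : ⌈(m : ℝ) / 36⌉₊ ≤ (univ.filter fun ℓ => thr ≤ |P ℓ ω|).card := Nat.ceil_le.2 hω
    obtain ⟨e⟩ : Nonempty (Fin ⌈(m : ℝ) / 36⌉₊ ↪ {ℓ // ℓ ∈ univ.filter fun ℓ => thr ≤ |P ℓ ω|}) :=
      Function.Embedding.nonempty_of_card_le (by rwa [Fintype.card_fin, Fintype.card_coe])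
    have hne : ∀ i j, i ≠ j → (e i).1 ≠ (e j).1 := fun i j h h' =>
      h (e.injective (Subtype.ext h'))
    have hmapd : ∀ X Y : Finset (Fin n), Disjoint Xᶜ Yᶜ → Disjoint (addLast X)ᶜ (addLast Y)ᶜ := by
      intro X Y h
      rw [compl_addLast, compl_addLast, disjoint_map]
      exact h
    have hsub : ∀ ℓ k (X Y : Finset (Fin n)), ℓ ≠ k → X ⊆ (A ℓ)ᶜ ∪ (B ℓ)ᶜ →
        Y ⊆ (A k)ᶜ ∪ (B k)ᶜ → Disjoint X Y := fun ℓ k X Y h hX hY =>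
      disjoint_of_subset_left hX (disjoint_of_subset_right hY (hE ℓ k h))
    have hcross : ∀ ℓ k, Disjoint (A' ℓ)ᶜ (B' k)ᶜ := by
      intro ℓ k
      by_cases h : ℓ = k
      · subst h; exact hd ℓ
      · exact hsub ℓ k _ _ h (hsA ℓ) (hsB k)
    refine ⟨fun i => addLast (A' (e i).1), fun i => addLast (B' (e i).1), ?_, ?_, ?_, ?_⟩
    · rintro (i | i) (j | j) hij
      · exact hmapd _ _ (hsub _ _ _ _ (hne i j fun h => hij (by rw [h])) (hsA _) (hsA _))
      · exact hmapd _ _ (hcross _ _)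
      · exact (hmapd _ _ (hcross _ _)).symm
      · exact hmapd _ _ (hsub _ _ _ _ (hne i j fun h => hij (by rw [h])) (hsB _) (hsB _))
    · intro i
      rw [card_addLast, hA']
    · intro i
      rw [card_addLast, hB']
    · intro i
      exact (mem_filter.1 (e i).2).2
  rw [probExt, le_div_iff₀ (by positivity)]
  rw [← sum_ind]
  have hsum : ∑ ω, ind (¬ bad ω) = 2 ^ ((n + 1) * (n + 1)) - ∑ ω, ind (bad ω) := by
    simp only [ind_not, sum_sub_distrib]
    simp [pow_mul]
  calc _ ≤ ∑ ω, ind (¬ bad ω) := by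
        rw [hsum]
        linarith
    _ ≤ _ := sum_le_sum fun ω _ => ind_mono (hgood ω)
end

section
/- Let f be a quadratic polynomial in n variables which has at least one multilinear degree-2 coefficient (i.e., a coefficient of some ξ_i ξ_j with i ≠ j) with absolute value at least r. Then for a uniformly random ξ ∈ {−1,1}^n, Pr(|f(ξ)| < r) ≤ 3/4. -/
open Finset

/-- Negation of the `i`-th coordinate of a real vector. -/
def negAt {n : ℕ} (i : Fin n) (x : Fin n → ℝ) : Fin n → ℝ := Function.update x i (-x i)

/-- Flip of the `i`-th bit, as a self-map of the Boolean cube. -/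
def flipAt {n : ℕ} (i : Fin n) (ξ : Fin n → Bool) : Fin n → Bool := Function.update ξ i (!ξ i)

lemma flipAt_injective {n : ℕ} (i : Fin n) : Function.Injective (flipAt i) := by
  have h : Function.Involutive (flipAt i) := fun ξ => by simp [flipAt]
  exact h.injective

lemma rad_flipAt {n : ℕ} (i : Fin n) (ξ : Fin n → Bool) :
    (fun k => rad (flipAt i ξ k)) = negAt i (fun k => rad (ξ k)) := by
  funext k
  rcases eq_or_ne k i with rfl | h
  · cases hk : ξ k <;> simp [flipAt, negAt, rad, hk]
  · simp [flipAt, negAt, h]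

lemma prod_negAt {n : ℕ} (i : Fin n) (x : Fin n → ℝ) (m : Fin n → ℕ) :
    ∏ k, negAt i x k ^ m k = (-1) ^ m i * ∏ k, x k ^ m k := by
  have h : ∀ k, negAt i x k ^ m k = (if k = i then (-1) ^ m i else 1) * x k ^ m k := by
    intro k
    rcases eq_or_ne k i with rfl | h
    · simp only [negAt, Function.update_self, if_true]
      rw [← mul_pow, neg_one_mul]
    · simp [negAt, h]
  simp only [h, Finset.prod_mul_distrib, Finset.prod_ite_eq', Finset.mem_univ, if_true]

/-- If both exponents are odd and the total degree is at most two, nothing else fits. -/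
lemma eq_single_add_single {n : ℕ} {i j : Fin n} (hij : i ≠ j) (m : Fin n →₀ ℕ)
    (hm : ∑ k, m k ≤ 2) (hi : Odd (m i)) (hj : Odd (m j)) :
    m = Finsupp.single i 1 + Finsupp.single j 1 := by
  have h1 : 1 ≤ m i := hi.pos
  have h2 : 1 ≤ m j := hj.pos
  have hle : Finsupp.single i 1 + Finsupp.single j 1 ≤ m := by
    intro k
    rcases eq_or_ne k i with rfl | h
    · simpa [hij] using h1
    · rcases eq_or_ne k j with rfl | h'
      · simpa [h] using h2
      · simp [h, h']
  have hs : ∑ k, (Finsupp.single i 1 + Finsupp.single j 1 : Fin n →₀ ℕ) k = 2 := by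
    simp [Finset.sum_add_distrib, Finsupp.single_apply]
  have := (Finset.sum_eq_sum_iff_of_le (s := univ) fun k _ => hle k).1
    (le_antisymm (Finset.sum_le_sum fun k _ => hle k) (by omega))
  ext k
  exact (this k (mem_univ k)).symm

lemma eval_mixed_difference {n : ℕ} (f : MvPolynomial (Fin n) ℝ) (hdeg : f.totalDegree ≤ 2)
    {i j : Fin n} (hij : i ≠ j) (x : Fin n → ℝ) :
    MvPolynomial.eval x f - MvPolynomial.eval (negAt i x) f - MvPolynomial.eval (negAt j x) f
      + MvPolynomial.eval (negAt i (negAt j x)) f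
      = 4 * f.coeff (Finsupp.single i 1 + Finsupp.single j 1) * (x i * x j) := by
  set e : Fin n →₀ ℕ := Finsupp.single i 1 + Finsupp.single j 1 with he
  have hprod : ∏ k, x k ^ e k = x i * x j := by
    simp only [he, Finsupp.add_apply, pow_add, Finset.prod_mul_distrib, Finsupp.single_apply,
      Finset.prod_pow_boole, Finset.mem_univ, if_true]
  have key : ∀ m ∈ f.support,
      f.coeff m * ((1 - (-1) ^ m i) * (1 - (-1) ^ m j) * ∏ k, x k ^ m k)
        = if m = e then 4 * f.coeff e * (x i * x j) else 0 := by
    intro m hm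
    split_ifs with h
    · have hi : e i = 1 := by simp [he, hij]
      have hj : e j = 1 := by simp [he, hij.symm]
      rw [h, hprod, hi, hj]
      ring
    · have hd : ∑ k, m k ≤ 2 := by
        have := (MvPolynomial.le_totalDegree hm).trans hdeg
        rwa [Finsupp.sum_fintype _ _ (fun _ => rfl)] at this
      rcases Nat.even_or_odd (m i) with hi | hi
      · simp [hi.neg_one_pow]
      rcases Nat.even_or_odd (m j) with hj | hj
      · simp [hj.neg_one_pow]
      exact absurd (eq_single_add_single hij m hd hi hj) h
  calc _ = ∑ m ∈ f.support,
        f.coeff m * ((1 - (-1) ^ m i) * (1 - (-1) ^ m j) * ∏ k, x k ^ m k) := by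
        simp only [MvPolynomial.eval_eq', prod_negAt]
        rw [← Finset.sum_sub_distrib, ← Finset.sum_sub_distrib, ← Finset.sum_add_distrib]
        exact Finset.sum_congr rfl fun m _ => by ring
    _ = _ := by
        rw [Finset.sum_congr rfl key, Finset.sum_ite_eq']
        split_ifs with h
        · rfl
        · rw [MvPolynomial.notMem_support_iff.1 h]; ring

open Classical in
/-- If a quadratic polynomial `f` in `n` variables has at least one multilinear degree-2
coefficient (the coefficient of `ξ_i ξ_j` with `i ≠ j`) of absolute value at least `r`,
then for a uniformly random `ξ ∈ {-1,1}^n` we have `Pr(|f(ξ)| < r) ≤ 3/4`. -/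
theorem quadratic_nondegenerate (n : ℕ) (f : MvPolynomial (Fin n) ℝ) (r : ℝ)
    (hdeg : f.totalDegree ≤ 2)
    (hcoeff : ∃ i j : Fin n, i ≠ j ∧
      r ≤ |f.coeff (Finsupp.single i 1 + Finsupp.single j 1)|) :
    ((univ.filter fun ξ : Fin n → Bool =>
        |MvPolynomial.eval (fun i => rad (ξ i)) f| < r).card : ℝ) / 2 ^ n ≤ 3 / 4 := by
  obtain ⟨i, j, hij, hr⟩ := hcoeff
  set F : (Fin n → Bool) → ℝ := fun ξ => MvPolynomial.eval (fun i => rad (ξ i)) f with hF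
  change ((univ.filter fun ξ => |F ξ| < r).card : ℝ) / 2 ^ n ≤ 3 / 4
  set G : Finset (Fin n → Bool) := univ.filter fun ξ => ¬ |F ξ| < r with hG
  have hsum : (univ.filter fun ξ => |F ξ| < r).card + G.card = 2 ^ n := by
    rw [hG, Finset.card_filter_add_card_filter_not]
    simp
  have horbit : ∀ ξ, ξ ∈ G ∨ flipAt i ξ ∈ G ∨ flipAt j ξ ∈ G ∨ flipAt i (flipAt j ξ) ∈ G := by
    intro ξ
    by_contra! hcon
    simp only [hG, mem_filter, mem_univ, true_and, not_not] at hcon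
    obtain ⟨h0, h1, h2, h3⟩ := hcon
    have hD : F ξ - F (flipAt i ξ) - F (flipAt j ξ) + F (flipAt i (flipAt j ξ))
        = 4 * f.coeff (Finsupp.single i 1 + Finsupp.single j 1) * (rad (ξ i) * rad (ξ j)) := by
      simp only [hF, rad_flipAt]
      exact eval_mixed_difference f hdeg hij _
    have habs := congrArg abs hD
    rw [abs_mul, abs_mul, abs_mul, abs_rad, abs_rad, abs_of_pos (by norm_num : (0 : ℝ) < 4)]
      at habs
    have hlt : |F ξ - F (flipAt i ξ) - F (flipAt j ξ) + F (flipAt i (flipAt j ξ))| < 4 * r := by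
      rw [abs_lt] at *
      constructor <;> linarith [h0.1, h0.2, h1.1, h1.2, h2.1, h2.2, h3.1, h3.2]
    linarith
  have hpre : ∀ g : (Fin n → Bool) → (Fin n → Bool), Function.Injective g →
      (univ.filter fun ξ => g ξ ∈ G).card ≤ G.card := fun g hg =>
    Finset.card_le_card_of_injOn g (fun ξ hξ => by simpa using hξ) hg.injOn
  have hcover : 2 ^ n ≤ 4 * G.card := by
    have hsub : (univ : Finset (Fin n → Bool)) ⊆
        (G ∪ univ.filter fun ξ => flipAt i ξ ∈ G) ∪
          ((univ.filter fun ξ => flipAt j ξ ∈ G) ∪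
            univ.filter fun ξ => flipAt i (flipAt j ξ) ∈ G) := by
      intro ξ _
      simp only [mem_union, mem_filter, mem_univ, true_and]
      have := horbit ξ
      tauto
    have h0 := Finset.card_le_card hsub
    have h1 := hpre _ (flipAt_injective i)
    have h2 := hpre _ (flipAt_injective j)
    have h3 := hpre _ ((flipAt_injective i).comp (flipAt_injective j))
    simp only [Function.comp_apply] at h3
    have hu : (univ : Finset (Fin n → Bool)).card = 2 ^ n := by simp
    have u0 := Finset.card_union_le (G ∪ univ.filter fun ξ => flipAt i ξ ∈ G)
      ((univ.filter fun ξ => flipAt j ξ ∈ G) ∪ univ.filter fun ξ => flipAt i (flipAt j ξ) ∈ G)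
    have u1 := Finset.card_union_le G (univ.filter fun ξ => flipAt i ξ ∈ G)
    have u2 := Finset.card_union_le (univ.filter fun ξ => flipAt j ξ ∈ G)
      (univ.filter fun ξ => flipAt i (flipAt j ξ) ∈ G)
    omega
  rw [div_le_iff₀ (by positivity)]
  have e1 : ((univ.filter fun ξ => |F ξ| < r).card : ℝ) + G.card = 2 ^ n := by exact_mod_cast hsum
  have e2 : (2 : ℝ) ^ n ≤ 4 * G.card := by exact_mod_cast hcover
  linarith
end

section
/- Let M be an n×n real matrix and let A,B ⊆ {1,…,n} with |A| = |B| be such that |per M[A,B]| ≥ λ for some λ > 0. Suppose a ∈ B \ A and b_1, b_2 ∈ A \ B are distinct. Then there are distinct i, j ∈ {a, b_1, b_2} such that, setting A' = A ∪ {a} and B' = (B \ {a}) ∪ {i, j}, one has |per M[A',B']^{(i,j)} + per M[A',B']^{(j,i)}| ≥ λ/2. -/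
/-!
Put `C = B \ {a}`, `A' = A ∪ {a}` and `P x = per M[A' \ {x}, C ∪ {x}]` for `x ∈ {a, b₁, b₂}`.
None of `a, b₁, b₂` lies in `C`, so removing column `j` from `C ∪ {i, j}` leaves `C ∪ {i}`, and the
quantity to be bounded is `|P i + P j|`; moreover `P a = per M[A, B]`. Since
`2 P a = (P a + P b₁) + (P a + P b₂) - (P b₁ + P b₂)`, if all three pair sums were smaller than
`λ/2` in absolute value, then `|P a| < 3λ/4 < λ`.
-/

open Finset

theorem insert_insert_erase_right {α : Type*} [DecidableEq α] {C : Finset α} {i j : α}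
    (hij : i ≠ j) (hj : j ∉ C) : (insert i (insert j C)).erase j = insert i C := by
  rw [Finset.erase_insert_of_ne hij, Finset.erase_insert hj]

theorem insert_insert_erase_left {α : Type*} [DecidableEq α] {C : Finset α} {i j : α}
    (hij : i ≠ j) (hi : i ∉ C) : (insert i (insert j C)).erase i = insert j C := by
  rw [Finset.insert_comm, insert_insert_erase_right hij.symm hi]

/-- No-cancellation lemma: if `M[A,B]` is `λ`-heavy, `a ∈ B \ A` and `b₁, b₂ ∈ A \ B`
are distinct, then there are distinct `i, j ∈ {a, b₁, b₂}` such that, with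
`A' = A ∪ {a}` and `B' = (B \ {a}) ∪ {i, j}`,
`|per M[A',B']^{(i,j)} + per M[A',B']^{(j,i)}| ≥ λ/2` (where `N^{(i,j)}` removes row `i`
and column `j`, i.e. `per M[A',B']^{(i,j)} = per M[A' \ {i}, B' \ {j}]`). -/
theorem per_no_cancel (n : ℕ) (M : Matrix (Fin n) (Fin n) ℝ) (A B : Finset (Fin n))
    (hAB : A.card = B.card) (lam : ℝ) (hlam : 0 < lam)
    (hheavy : lam ≤ |permOn M A B|)
    (a b₁ b₂ : Fin n) (ha : a ∈ B \ A) (hb₁ : b₁ ∈ A \ B) (hb₂ : b₂ ∈ A \ B)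
    (hb : b₁ ≠ b₂) :
    ∃ i j : Fin n, i ≠ j ∧ i ∈ ({a, b₁, b₂} : Finset (Fin n)) ∧
      j ∈ ({a, b₁, b₂} : Finset (Fin n)) ∧
      lam / 2 ≤
        |permOn M ((insert a A).erase i) ((insert i (insert j (B.erase a))).erase j) +
          permOn M ((insert a A).erase j) ((insert i (insert j (B.erase a))).erase i)| := by
  rw [Finset.mem_sdiff] at ha hb₁ hb₂
  have hab₁ : a ≠ b₁ := fun h => ha.2 (h ▸ hb₁.1)
  have hab₂ : a ≠ b₂ := fun h => ha.2 (h ▸ hb₂.1)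
  have hCa : a ∉ B.erase a := Finset.notMem_erase a B
  have hC₁ : b₁ ∉ B.erase a := fun h => hb₁.2 (Finset.mem_of_mem_erase h)
  have hC₂ : b₂ ∉ B.erase a := fun h => hb₂.2 (Finset.mem_of_mem_erase h)
  by_contra! hcon
  have h₁ := hcon a b₁ hab₁ (by simp) (by simp)
  have h₂ := hcon a b₂ hab₂ (by simp) (by simp)
  have h₃ := hcon b₁ b₂ hb (by simp) (by simp)
  rw [insert_insert_erase_right hab₁ hC₁, insert_insert_erase_left hab₁ hCa,
    Finset.erase_insert ha.2, Finset.insert_erase ha.1, abs_lt] at h₁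
  rw [insert_insert_erase_right hab₂ hC₂, insert_insert_erase_left hab₂ hCa,
    Finset.erase_insert ha.2, Finset.insert_erase ha.1, abs_lt] at h₂
  rw [insert_insert_erase_right hb hC₂, insert_insert_erase_left hb hC₁, abs_lt] at h₃
  rcases le_abs.1 hheavy with h | h <;> linarith [h₁.1, h₁.2, h₂.1, h₂.2, h₃.1, h₃.2]
end
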